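/- Let n ≥ 2 and let Ω be a domain in ℝⁿ. Let 𝔘(Ω) be the set of harmonic functions u in Ω with sup_Ω |u| ≤ 1. Suppose a point ξ ∈ ∂Ω can be touched by an interior ball B ⊂ Ω (i.e., B is an open ball contained in Ω with ξ on its boundary). Then limsup_{x→ξ} sup_{u∈𝔘(Ω)} |x−ξ| · |∇u(x)| ≤ C_n, where x ranges over points of the radius of B directed from the center of B to ξ, and C_n = 4(n−1)^{(n−1)/2} ω_{n−1} / (n^{n/2} ω_n). -/

import Mathlib

open MeasureTheory Real Filter Metric
open scoped Real RealInnerProductSpace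

noncomputable section

/-- `Eu n` is the Euclidean space `ℝⁿ`. -/
abbrev Eu (n : ℕ) := EuclideanSpace ℝ (Fin n)

/-- `ω_n`: the surface area of the unit sphere `S^{n-1}` in `ℝⁿ`,
given by the classical formula `2 π^{n/2} / Γ(n/2)`. -/
def sphereArea (n : ℕ) : ℝ := 2 * π ^ ((n : ℝ) / 2) / Real.Gamma ((n : ℝ) / 2)

/-- A function is harmonic on a set: it is twice continuously differentiable
there and its Laplacian (the sum of the pure second partial derivatives in the
coordinate directions) vanishes at every point of the set. -/
def IsHarmonicOn {n : ℕ} (u : Eu n → ℝ) (Ω : Set (Eu n)) : Prop :=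
  ContDiffOn ℝ 2 u Ω ∧ ∀ x ∈ Ω,
    ∑ i, fderiv ℝ (fun y => fderiv ℝ u y (EuclideanSpace.single i 1)) x
      (EuclideanSpace.single i 1) = 0

/-- The constant `C_n = 4 (n-1)^{(n-1)/2} ω_{n-1} / (n^{n/2} ω_n)`. -/
def Cconst (n : ℕ) : ℝ :=
  4 * ((n : ℝ) - 1) ^ (((n : ℝ) - 1) / 2) * sphereArea (n - 1) /
    ((n : ℝ) ^ ((n : ℝ) / 2) * sphereArea n)

/-!
Write `e` for the inner unit normal at `ξ` and `d = |x - ξ|`. The ball `B` contains a half-ball with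
inner normal `e` whose flat side is centred on the radius at a distance `≪ d` from `ξ` and whose
radius is `≫ d`. On it, `u` differs from the Poisson integral `v` of its own values on the flat side
by a bounded harmonic function vanishing on the flat side; comparison with an explicit quadratic
barrier makes the gradient of this difference negligible against `1 / d`.

For `v`, scaling gives `d |∂_l v(x)| ≤ (2 / ω_n) ∫ |⟪e, l⟫ - n ⟪e, y⟫ ⟪l, y⟫ / |y| ^ 2|`, integrated
against the half-space Poisson kernel. Central projection turns this into an integral over the unit
ball of the whole space, where polarization in `(e, l)` shows that `l = e` is the worst unit
direction; for `l = e` the integral is elementary and yields `C_n`.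
-/

open InnerProductSpace Laplacian Topology Module

section Laplacian

variable {E : Type*} [NormedAddCommGroup E] [InnerProductSpace ℝ E]

theorem iteratedFDeriv_two_apply_eq_fderiv_fderiv {f : E → ℝ} {x : E}
    (hf : ContDiffAt ℝ 2 f x) (v w : E) :
    iteratedFDeriv ℝ 2 f x ![v, w] = fderiv ℝ (fun y => fderiv ℝ f y w) x v := by
  have hfderiv : DifferentiableAt ℝ (fderiv ℝ f) x :=
    (hf.fderiv_right (m := 1) le_rfl).differentiableAt one_ne_zero
  rw [iteratedFDeriv_two_apply, (hfderiv.hasFDerivAt.clm_apply (hasFDerivAt_const w x)).fderiv]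
  simp

theorem contDiff_quadratic (e : E) (a b c : ℝ) :
    ContDiff ℝ 2 fun y : E => a * ⟪e, y⟫ + b * ‖y‖ ^ 2 + c * ⟪e, y⟫ ^ 2 := by
  have hinner : ContDiff ℝ 2 fun y : E => ⟪e, y⟫ := (innerSL ℝ e).contDiff
  have hnorm : ContDiff ℝ 2 fun y : E => ‖y‖ ^ 2 := contDiff_norm_sq ℝ
  fun_prop

theorem hasFDerivAt_inner_const_left (w x : E) :
    HasFDerivAt (fun y : E => ⟪w, y⟫) (innerSL ℝ w) x :=
  (innerSL ℝ w).hasFDerivAt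

theorem hasFDerivAt_normSq_rpow (a : ℝ) {x : E} (hx : x ≠ 0) :
    HasFDerivAt (fun y : E => (‖y‖ ^ 2) ^ a) ((2 * a * (‖x‖ ^ 2) ^ (a - 1)) • innerSL ℝ x) x := by
  have h := (hasStrictFDerivAt_norm_sq x).hasFDerivAt.rpow_const (p := a)
    (Or.inl (pow_ne_zero 2 (norm_ne_zero_iff.2 hx)))
  refine h.congr_fderiv ?_
  ext v
  simp only [smul_apply, coe_innerSL_apply, nsmul_eq_mul, Nat.cast_ofNat, smul_eq_mul]
  ring

theorem hasFDerivAt_inner_mul_normSq_rpow (e : E) (a : ℝ) {x : E} (hx : x ≠ 0) :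
    HasFDerivAt (fun y : E => ⟪e, y⟫ * (‖y‖ ^ 2) ^ a)
      ((‖x‖ ^ 2) ^ a • innerSL ℝ e
        + (2 * a * ⟪e, x⟫ * (‖x‖ ^ 2) ^ (a - 1)) • innerSL ℝ x) x := by
  refine ((hasFDerivAt_inner_const_left e x).mul (hasFDerivAt_normSq_rpow a hx)).congr_fderiv ?_
  ext v
  simp only [add_apply, smul_apply, coe_innerSL_apply, smul_eq_mul]
  ring

theorem contDiffAt_inner_mul_normSq_rpow (e : E) (a : ℝ) {x : E} (hx : x ≠ 0) :
    ContDiffAt ℝ 2 (fun y : E => ⟪e, y⟫ * (‖y‖ ^ 2) ^ a) x :=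
  (contDiffAt_const.inner ℝ contDiffAt_id).mul <| ContDiffAt.rpow_const_of_ne
    (contDiff_norm_sq ℝ).contDiffAt (pow_ne_zero 2 (norm_ne_zero_iff.2 hx))

theorem fderiv_fderiv_inner_mul_normSq_rpow (e w : E) (a : ℝ) {x : E} (hx : x ≠ 0) :
    fderiv ℝ (fun y => fderiv ℝ (fun y : E => ⟪e, y⟫ * (‖y‖ ^ 2) ^ a) y w) x w
      = 4 * a * (⟪e, w⟫ * ⟪w, x⟫) * (‖x‖ ^ 2) ^ (a - 1)
        + 2 * a * ⟪e, x⟫ * (‖x‖ ^ 2) ^ (a - 1) * ‖w‖ ^ 2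
        + 4 * a * (a - 1) * ⟪e, x⟫ * (‖x‖ ^ 2) ^ (a - 2) * ⟪w, x⟫ ^ 2 := by
  have first_deriv : (fun y => fderiv ℝ (fun y : E => ⟪e, y⟫ * (‖y‖ ^ 2) ^ a) y w) =ᶠ[𝓝 x]
      fun y => ⟪e, w⟫ * (‖y‖ ^ 2) ^ a + 2 * a * ((⟪e, y⟫ * (‖y‖ ^ 2) ^ (a - 1)) * ⟪w, y⟫) := by
    filter_upwards [isOpen_ne.mem_nhds hx] with y hy
    rw [(hasFDerivAt_inner_mul_normSq_rpow e a hy).fderiv]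
    simp only [add_apply, smul_apply, coe_innerSL_apply, smul_eq_mul, real_inner_comm w y]
    ring
  have second_deriv := ((hasFDerivAt_normSq_rpow a hx).const_mul ⟪e, w⟫).fun_add
    (((hasFDerivAt_inner_mul_normSq_rpow e (a - 1) hx).fun_mul
      (hasFDerivAt_inner_const_left w x)).const_mul (2 * a))
  rw [first_deriv.fderiv_eq, second_deriv.fderiv, show a - 2 = a - 1 - 1 by ring]
  simp only [smul_add, add_apply, smul_apply, coe_innerSL_apply, real_inner_comm w x, smul_eq_mul,
    inner_self_eq_norm_sq_to_K, ringHom_apply]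
  ring

variable [FiniteDimensional ℝ E]

theorem laplacian_eq_sum_fderiv_fderiv {ι : Type*} [Fintype ι] (b : OrthonormalBasis ι ℝ E)
    {f : E → ℝ} {x : E} (hf : ContDiffAt ℝ 2 f x) :
    Δ f x = ∑ i, fderiv ℝ (fun y => fderiv ℝ f y (b i)) x (b i) := by
  simp only [laplacian_eq_iteratedFDeriv_orthonormalBasis f b,
    iteratedFDeriv_two_apply_eq_fderiv_fderiv hf]

theorem IsHarmonicOn.harmonicOnNhd {n : ℕ} {u : Eu n → ℝ} {Ω : Set (Eu n)}
    (hu : IsHarmonicOn u Ω) (hΩ : IsOpen Ω) : HarmonicOnNhd u Ω := by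
  have contDiffAt (x) (hx : x ∈ Ω) : ContDiffAt ℝ 2 u x := hu.1.contDiffAt (hΩ.mem_nhds hx)
  refine fun x hx => ⟨contDiffAt x hx, ?_⟩
  filter_upwards [hΩ.mem_nhds hx] with y hy
  simpa [laplacian_eq_sum_fderiv_fderiv (EuclideanSpace.basisFun (Fin n) ℝ) (contDiffAt y hy)]
    using hu.2 y hy

section Isometry

variable {E' : Type*} [NormedAddCommGroup E'] [InnerProductSpace ℝ E'] [FiniteDimensional ℝ E']

theorem laplacian_comp_add_linearIsometryEquiv (f : E' → ℝ) (p : E') (Φ : E ≃ₗᵢ[ℝ] E') (x : E) :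
    Δ (fun y => f (p + Φ y)) x = Δ f (p + Φ x) := by
  let b := stdOrthonormalBasis ℝ E
  rw [laplacian_eq_iteratedFDeriv_orthonormalBasis _ b,
    laplacian_eq_iteratedFDeriv_orthonormalBasis _ (b.map Φ)]
  refine Finset.sum_congr rfl fun i _ => ?_
  have chain := Φ.toContinuousLinearEquiv.iteratedFDerivWithin_comp_right
    (fun z => f (p + z)) uniqueDiffOn_univ (Set.mem_univ (Φ x)) 2
  rw [Set.preimage_univ, iteratedFDerivWithin_univ, iteratedFDerivWithin_univ,
    iteratedFDeriv_comp_add_left] at chain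
  refine (congrArg (· ![b i, b i]) chain).trans ?_
  simp only [ContinuousMultilinearMap.compContinuousLinearMap_apply]
  congr 1
  ext j
  fin_cases j <;> simp

theorem harmonicAt_comp_add_linearIsometryEquiv {f : E' → ℝ} {p : E'} {Φ : E ≃ₗᵢ[ℝ] E'} {x : E}
    (hf : HarmonicAt f (p + Φ x)) : HarmonicAt (fun y => f (p + Φ y)) x := by
  have hsmooth : ContDiff ℝ 2 fun y => p + Φ y := contDiff_const.add Φ.contDiff
  refine ⟨hf.1.comp x hsmooth.contDiffAt, ?_⟩
  filter_upwards [hsmooth.continuous.continuousAt.eventually hf.2] with y hy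
  rw [laplacian_comp_add_linearIsometryEquiv]
  exact hy

end Isometry

theorem laplacian_quadratic (e : E) (a b c : ℝ) (x : E) :
    Δ (fun y : E => a * ⟪e, y⟫ + b * ‖y‖ ^ 2 + c * ⟪e, y⟫ ^ 2) x
      = 2 * b * finrank ℝ E + 2 * c * ‖e‖ ^ 2 := by
  have first_deriv (y w : E) :
      fderiv ℝ (fun y : E => a * ⟪e, y⟫ + b * ‖y‖ ^ 2 + c * ⟪e, y⟫ ^ 2) y w
        = a * ⟪e, w⟫ + 2 * b * ⟪w, y⟫ + 2 * c * ⟪e, w⟫ * ⟪e, y⟫ := by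
    rw [((((hasFDerivAt_inner_const_left e y).const_mul a).fun_add
      ((hasStrictFDerivAt_norm_sq y).hasFDerivAt.const_mul b)).fun_add
      (((hasFDerivAt_inner_const_left e y).pow 2).const_mul c)).fderiv]
    simp only [Nat.add_one_sub_one, pow_one, nsmul_eq_mul, Nat.cast_ofNat, add_apply, smul_apply,
      coe_innerSL_apply, smul_eq_mul, real_inner_comm w y]
    ring
  have second_deriv (w : E) :
      fderiv ℝ (fun y : E => a * ⟪e, w⟫ + 2 * b * ⟪w, y⟫ + 2 * c * ⟪e, w⟫ * ⟪e, y⟫) x w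
        = 2 * b * ‖w‖ ^ 2 + 2 * c * ⟪e, w⟫ ^ 2 := by
    rw [((((hasFDerivAt_inner_const_left w x).const_mul (2 * b)).const_add (a * ⟪e, w⟫)).fun_add
      ((hasFDerivAt_inner_const_left e x).const_mul (2 * c * ⟪e, w⟫))).fderiv]
    simp only [add_apply, smul_apply, coe_innerSL_apply, inner_self_eq_norm_sq_to_K, ringHom_apply,
      smul_eq_mul, add_right_inj]
    ring
  let basis := stdOrthonormalBasis ℝ E
  rw [laplacian_eq_sum_fderiv_fderiv basis (contDiff_quadratic e a b c).contDiffAt]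
  simp only [first_deriv, second_deriv, Finset.sum_add_distrib, ← Finset.mul_sum,
    basis.sum_sq_inner_left, basis.norm_eq_one]
  simp

theorem laplacian_inner_mul_normSq_rpow (e : E) (a : ℝ) {x : E} (hx : x ≠ 0) :
    Δ (fun y : E => ⟪e, y⟫ * (‖y‖ ^ 2) ^ a) x
      = 2 * a * (finrank ℝ E + 2 * a) * ⟪e, x⟫ * (‖x‖ ^ 2) ^ (a - 1) := by
  have hx' : ‖x‖ ^ 2 ≠ 0 := pow_ne_zero 2 (norm_ne_zero_iff.2 hx)
  have hpow : (‖x‖ ^ 2) ^ (a - 1) = (‖x‖ ^ 2) ^ (a - 2) * ‖x‖ ^ 2 := by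
    rw [← rpow_add_one hx']
    ring_nf
  let b := stdOrthonormalBasis ℝ E
  have sum_inner : ∑ i, ⟪e, b i⟫ * ⟪b i, x⟫ = ⟪e, x⟫ := b.sum_inner_mul_inner e x
  rw [laplacian_eq_sum_fderiv_fderiv b (contDiffAt_inner_mul_normSq_rpow e a hx)]
  simp only [fderiv_fderiv_inner_mul_normSq_rpow e _ a hx, Finset.sum_add_distrib,
    ← Finset.mul_sum, ← Finset.sum_mul, sum_inner, b.sum_sq_inner_right, b.norm_eq_one]
  simp only [one_pow, Finset.sum_const, Finset.card_univ, Fintype.card_fin, nsmul_eq_mul, hpow]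
  ring

/-- The derivative of the fundamental solution in the direction `e`, up to a constant. For a unit
vector `e` this is, up to normalisation, the Poisson kernel of the half-space `⟪e, x⟫ > 0` with
pole `0`. -/
def dipole (e x : E) : ℝ := ⟪e, x⟫ * (‖x‖ ^ 2) ^ (-(finrank ℝ E : ℝ) / 2)

theorem harmonicAt_dipole (e : E) {x : E} (hx : x ≠ 0) : HarmonicAt (dipole e) x := by
  refine ⟨contDiffAt_inner_mul_normSq_rpow e _ hx, ?_⟩
  filter_upwards [isOpen_ne.mem_nhds hx] with y hy
  refine (laplacian_inner_mul_normSq_rpow e _ hy).trans ?_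
  simp only [Pi.zero_apply]
  ring

end Laplacian

section MaximumPrinciple

theorem deriv_deriv_nonpos_of_isLocalMax {f : ℝ → ℝ} {a : ℝ} (hf : ContinuousAt f a)
    (hmax : IsLocalMax f a) : deriv (deriv f) a ≤ 0 := by
  by_contra! hpos
  have hmin : IsLocalMin f a := isLocalMin_of_deriv_deriv_pos hpos hmax.deriv_eq_zero hf
  have hconst : f =ᶠ[𝓝 a] fun _ => f a := by
    filter_upwards [hmin, hmax] with x hge hle using le_antisymm hle hge
  have hderiv : deriv f =ᶠ[𝓝 a] fun _ => 0 := hconst.deriv.trans (by simp [EventuallyEq])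
  simp [hderiv.deriv_eq] at hpos

variable {E : Type*} [NormedAddCommGroup E] [InnerProductSpace ℝ E]

theorem deriv_deriv_comp_add_smul {f : E → ℝ} {x : E} (hf : ContDiffAt ℝ 2 f x) (w : E) :
    deriv (deriv fun t : ℝ => f (x + t • w)) 0 = fderiv ℝ (fun y => fderiv ℝ f y w) x w := by
  have line_deriv (t : ℝ) : HasDerivAt (fun t : ℝ => x + t • w) w t := by
    simpa using ((hasDerivAt_id t).smul_const w).const_add x
  have along_line {g : E → ℝ} {t : ℝ} (hg : DifferentiableAt ℝ g (x + t • w)) :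
      deriv (fun t : ℝ => g (x + t • w)) t = fderiv ℝ g (x + t • w) w :=
    (hg.hasFDerivAt.comp_hasDerivAt t (line_deriv t)).deriv
  have hline : Tendsto (fun t : ℝ => x + t • w) (𝓝 0) (𝓝 x) := by
    simpa using (line_deriv 0).continuousAt.tendsto
  have first_deriv :
      (deriv fun t : ℝ => f (x + t • w)) =ᶠ[𝓝 0] fun t => fderiv ℝ f (x + t • w) w := by
    filter_upwards [hline.eventually (hf.eventually (by simp))] with t ht
    exact along_line (ht.differentiableAt two_ne_zero)
  have hfderiv : DifferentiableAt ℝ (fun y => fderiv ℝ f y w) x :=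
    ((hf.fderiv_right (m := 1) le_rfl).differentiableAt one_ne_zero).clm_apply
      (differentiableAt_const w)
  rw [first_deriv.deriv_eq, along_line (g := fun y => fderiv ℝ f y w) (by simpa using hfderiv)]
  simp

/-- The closed half-ball of radius `M` about the origin on the side to which `e` points. -/
def closedHalfBall (e : E) (M : ℝ) : Set E := {x | 0 ≤ ⟪e, x⟫ ∧ ‖x‖ ≤ M}

theorem closedHalfBall_mem_nhds {e x : E} {M : ℝ} (hx : 0 < ⟪e, x⟫) (hxM : ‖x‖ < M) :
    closedHalfBall e M ∈ 𝓝 x := by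
  have hinner : ContinuousAt (fun y : E => ⟪e, y⟫) x := by fun_prop
  filter_upwards [hinner.eventually_const_lt hx, continuousAt_id.norm.eventually_lt_const hxM]
    with y hy hyM using ⟨hy.le, hyM.le⟩

/-- A harmonic polynomial that, for a unit vector `e`, is at least `M ^ 2` on the spherical part of
the boundary of `closedHalfBall e M` and nonnegative on its flat part. -/
def halfBallBarrier (e : E) (M : ℝ) (x : E) : ℝ :=
  finrank ℝ E * M * ⟪e, x⟫ + ‖x‖ ^ 2 - finrank ℝ E * ⟪e, x⟫ ^ 2

theorem halfBallBarrier_eq_quadratic (e : E) (M : ℝ) :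
    halfBallBarrier e M = fun x : E =>
      finrank ℝ E * M * ⟪e, x⟫ + 1 * ‖x‖ ^ 2 + -(finrank ℝ E : ℝ) * ⟪e, x⟫ ^ 2 := by
  ext x
  simp only [halfBallBarrier]
  ring

theorem contDiff_halfBallBarrier (e : E) (M : ℝ) : ContDiff ℝ 2 (halfBallBarrier e M) := by
  rw [halfBallBarrier_eq_quadratic]
  exact contDiff_quadratic e _ _ _

theorem le_halfBallBarrier_of_norm_eq {e : E} (he : ‖e‖ = 1) {M : ℝ} {x : E} (hx : 0 ≤ ⟪e, x⟫)
    (hxM : ‖x‖ = M) : M ^ 2 ≤ halfBallBarrier e M x := by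
  have hinner_le : ⟪e, x⟫ ≤ M := by simpa [he, hxM] using real_inner_le_norm e x
  have hprod : 0 ≤ finrank ℝ E * (⟪e, x⟫ * (M - ⟪e, x⟫)) :=
    mul_nonneg (Nat.cast_nonneg _) (mul_nonneg hx (sub_nonneg.2 hinner_le))
  rw [halfBallBarrier, hxM]
  linarith

theorem hasFDerivAt_halfBallBarrier_zero (e : E) (M : ℝ) :
    HasFDerivAt (halfBallBarrier e M) ((finrank ℝ E * M) • innerSL ℝ e) 0 := by
  have hinner := hasFDerivAt_inner_const_left e 0
  refine (((hinner.const_mul (finrank ℝ E * M)).add (hasStrictFDerivAt_norm_sq 0).hasFDerivAt).sub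
    ((hinner.pow 2).const_mul (finrank ℝ E : ℝ))).congr_fderiv ?_
  simp

theorem hasFDerivAt_apply_nonpos_of_nonpos_on_closedHalfBall {l : E} {r : ℝ} (hr : 0 < r)
    (hl : ‖l‖ = 1) {f : E → ℝ} {f' : E →L[ℝ] ℝ} (hf : HasFDerivAt f f' 0) (hf0 : f 0 = 0)
    (hle : ∀ x ∈ closedHalfBall l r, f x ≤ 0) : f' l ≤ 0 := by
  have hmax : IsLocalMaxOn f (closedHalfBall l r) 0 := by
    filter_upwards [self_mem_nhdsWithin] with x hx
    rw [hf0]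
    exact hle x hx
  have hcone : r • l ∈ posTangentConeAt (closedHalfBall l r) 0 := by
    refine mem_posTangentConeAt_of_segment_subset ?_
    rw [zero_add, segment_eq_image']
    rintro _ ⟨t, ⟨ht0, ht1⟩, rfl⟩
    simp only [sub_zero, zero_add, closedHalfBall, Set.mem_ofPred_eq, inner_smul_right, norm_smul,
      real_inner_self_eq_norm_sq, hl, norm_of_nonneg ht0, norm_of_nonneg hr.le]
    exact ⟨by positivity, by nlinarith⟩
  have := hmax.hasFDerivWithinAt_nonpos hf.hasFDerivWithinAt hcone
  rw [map_smul, smul_eq_mul] at this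
  exact nonpos_of_mul_nonpos_right this hr

variable [FiniteDimensional ℝ E]

theorem laplacian_nonpos_of_isLocalMax {f : E → ℝ} {x : E} (hf : ContDiffAt ℝ 2 f x)
    (hmax : IsLocalMax f x) : Δ f x ≤ 0 := by
  rw [laplacian_eq_sum_fderiv_fderiv (stdOrthonormalBasis ℝ E) hf]
  refine Finset.sum_nonpos fun i _ => ?_
  rw [← deriv_deriv_comp_add_smul hf]
  have hline : ContinuousAt (fun t : ℝ => x + t • stdOrthonormalBasis ℝ E i) 0 := by fun_prop
  refine deriv_deriv_nonpos_of_isLocalMax (ContinuousAt.comp (by simpa using hf.continuousAt) hline)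
    ?_
  exact IsLocalMax.comp_continuous (g := fun t : ℝ => x + t • stdOrthonormalBasis ℝ E i)
    (by simpa using hmax) hline

theorem nonpos_of_laplacian_nonneg_of_pos [Nontrivial E] {K : Set E} (hK : IsCompact K)
    {f : E → ℝ} (hf : ContinuousOn f K)
    (hsub : ∀ x ∈ K, 0 < f x → K ∈ 𝓝 x ∧ ContDiffAt ℝ 2 f x ∧ 0 ≤ Δ f x) :
    ∀ x ∈ K, f x ≤ 0 := by
  by_contra! ⟨x₀, hx₀, hpos⟩
  obtain ⟨M, hM⟩ := hK.isBounded.exists_norm_le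
  let ε := f x₀ / (2 * (M ^ 2 + 1))
  have hε : 0 < ε := by positivity
  have hεM : ε * M ^ 2 < f x₀ := by
    rw [div_mul_eq_mul_div, div_lt_iff₀ (by positivity)]
    nlinarith [mul_nonneg hpos.le (sq_nonneg M)]
  let g : E → ℝ := fun x => f x + ε * ‖x‖ ^ 2
  obtain ⟨z, hz, hzmax⟩ := hK.exists_isMaxOn ⟨x₀, hx₀⟩
    (show ContinuousOn g K from hf.add (by fun_prop))
  have hfz : 0 < f z := by
    have hgz : f x₀ + ε * ‖x₀‖ ^ 2 ≤ f z + ε * ‖z‖ ^ 2 := hzmax hx₀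
    have hzM : ε * ‖z‖ ^ 2 ≤ ε * M ^ 2 :=
      mul_le_mul_of_nonneg_left (pow_le_pow_left₀ (norm_nonneg z) (hM z hz) 2) hε.le
    have : 0 ≤ ε * ‖x₀‖ ^ 2 := by positivity
    linarith
  obtain ⟨hKz, hsmooth, hΔ⟩ := hsub z hz hfz
  have hquad : ContDiff ℝ 2 fun y : E => ε * ‖y‖ ^ 2 := contDiff_const.mul (contDiff_norm_sq ℝ)
  have hΔquad : Δ (fun y : E => ε * ‖y‖ ^ 2) z = 2 * ε * finrank ℝ E := by
    simpa using laplacian_quadratic (0 : E) 0 ε 0 z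
  have hΔg : Δ g z = Δ f z + 2 * ε * finrank ℝ E := by
    rw [← hΔquad]
    exact hsmooth.laplacian_add hquad.contDiffAt
  have hΔg_nonpos : Δ g z ≤ 0 :=
    laplacian_nonpos_of_isLocalMax (hsmooth.add hquad.contDiffAt) (hzmax.isLocalMax hKz)
  have hdim : (0 : ℝ) < finrank ℝ E := by exact_mod_cast finrank_pos
  have : 0 < 2 * ε * finrank ℝ E := by positivity
  linarith

theorem isCompact_closedHalfBall (e : E) (M : ℝ) : IsCompact (closedHalfBall e M) := by
  have hclosed : IsClosed {x : E | 0 ≤ ⟪e, x⟫} := isClosed_le continuous_const (by fun_prop)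
  refine ((isCompact_closedBall (0 : E) M).inter_left hclosed).of_isClosed_subset ?_ ?_
  · exact hclosed.inter (isClosed_le continuous_norm continuous_const)
  · exact fun x hx => ⟨hx.1, by simpa using hx.2⟩

theorem harmonicAt_halfBallBarrier {e : E} (he : ‖e‖ = 1) (M : ℝ) (x : E) :
    HarmonicAt (halfBallBarrier e M) x := by
  refine ⟨(contDiff_halfBallBarrier e M).contDiffAt, Eventually.of_forall fun y => ?_⟩
  rw [halfBallBarrier_eq_quadratic, laplacian_quadratic, he]
  simp

theorem le_halfBallBarrier_of_eq_zero_on_flat {e : E} (he : ‖e‖ = 1) {M S : ℝ}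
    (hM : 0 < M) {h : E → ℝ} (hcont : ContinuousOn h (closedHalfBall e M))
    (hharm : ∀ x, 0 < ⟪e, x⟫ → ‖x‖ < M → HarmonicAt h x)
    (hbound : ∀ x ∈ closedHalfBall e M, |h x| ≤ S)
    (hflat : ∀ x ∈ closedHalfBall e M, ⟪e, x⟫ = 0 → h x = 0) :
    ∀ x ∈ closedHalfBall e M, h x ≤ S / M ^ 2 * halfBallBarrier e M x := by
  have : Nontrivial E := nontrivial_of_ne e 0 (norm_ne_zero_iff.1 (by simp [he]))
  have hS : 0 ≤ S := (abs_nonneg _).trans (hbound 0 (by simp [closedHalfBall, hM.le]))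
  suffices hdiff : ∀ x ∈ closedHalfBall e M, (h - (S / M ^ 2) • halfBallBarrier e M) x ≤ 0 from
    fun x hx => sub_nonpos.1 (hdiff x hx)
  refine nonpos_of_laplacian_nonneg_of_pos (isCompact_closedHalfBall e M)
    (hcont.sub ((contDiff_halfBallBarrier e M).continuous.const_smul _).continuousOn)
    fun x hx hpos => ?_
  simp only [Pi.sub_apply, Pi.smul_apply, smul_eq_mul, sub_pos] at hpos
  have hx_inner : 0 < ⟪e, x⟫ := by
    refine hx.1.lt_of_ne fun h0 => hpos.not_ge ?_
    rw [hflat x hx h0.symm, halfBallBarrier, ← h0]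
    have : 0 ≤ S / M ^ 2 * ‖x‖ ^ 2 := by positivity
    simpa using this
  have hx_norm : ‖x‖ < M := by
    refine hx.2.lt_of_ne fun hnorm => hpos.not_ge ?_
    calc h x ≤ S := (le_abs_self _).trans (hbound x hx)
      _ = S / M ^ 2 * M ^ 2 := by field_simp
      _ ≤ S / M ^ 2 * halfBallBarrier e M x := by
        gcongr
        exact le_halfBallBarrier_of_norm_eq he hx.1 hnorm
  have hdiff := (hharm x hx_inner hx_norm).sub
    ((harmonicAt_halfBallBarrier he M x).const_smul (c := S / M ^ 2))
  exact ⟨closedHalfBall_mem_nhds hx_inner hx_norm, hdiff.1, hdiff.2.self_of_nhds.ge⟩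

theorem abs_le_halfBallBarrier_of_eq_zero_on_flat {e : E} (he : ‖e‖ = 1) {M S : ℝ}
    (hM : 0 < M) {h : E → ℝ} (hcont : ContinuousOn h (closedHalfBall e M))
    (hharm : ∀ x, 0 < ⟪e, x⟫ → ‖x‖ < M → HarmonicAt h x)
    (hbound : ∀ x ∈ closedHalfBall e M, |h x| ≤ S)
    (hflat : ∀ x ∈ closedHalfBall e M, ⟪e, x⟫ = 0 → h x = 0) :
    ∀ x ∈ closedHalfBall e M, |h x| ≤ S / M ^ 2 * halfBallBarrier e M x := by
  refine fun x hx => abs_le.2 ⟨neg_le.1 ?_,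
    le_halfBallBarrier_of_eq_zero_on_flat he hM hcont hharm hbound hflat x hx⟩
  exact le_halfBallBarrier_of_eq_zero_on_flat he hM (h := -h) hcont.neg
    (fun y hy hyM => (hharm y hy hyM).neg) (fun y hy => by simpa using hbound y hy)
    (fun y hy hy0 => by simp [hflat y hy hy0]) x hx

end MaximumPrinciple

section InteriorGradientEstimate

variable {E : Type*} [NormedAddCommGroup E] [InnerProductSpace ℝ E] [FiniteDimensional ℝ E]

theorem sub_reflection_le_halfBallBarrier {h : E → ℝ} {x l : E} {r S : ℝ}
    (hr : 0 < r) (hl : ‖l‖ = 1) (hharm : HarmonicOnNhd h (closedBall x r))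
    (hbound : ∀ y ∈ closedBall x r, |h y| ≤ S) :
    ∀ y ∈ closedHalfBall l r,
      h (x + y) - h (x + (ℝ ∙ l)ᗮ.reflection y) ≤ 2 * S / r ^ 2 * halfBallBarrier l r y := by
  let ρ : E ≃ₗᵢ[ℝ] E := (ℝ ∙ l)ᗮ.reflection
  have mem_ball (Φ : E ≃ₗᵢ[ℝ] E) {y : E} (hy : ‖y‖ ≤ r) : x + Φ y ∈ closedBall x r := by
    simpa [mem_closedBall_iff_norm] using hy
  have comp_harm (Φ : E ≃ₗᵢ[ℝ] E) {y : E} (hy : ‖y‖ ≤ r) : HarmonicAt (fun y => h (x + Φ y)) y :=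
    harmonicAt_comp_add_linearIsometryEquiv (hharm _ (mem_ball Φ hy))
  have odd_harm (y : E) (hy : ‖y‖ ≤ r) : HarmonicAt (fun y => h (x + y) - h (x + ρ y)) y :=
    (comp_harm (.refl ℝ E) hy).sub (comp_harm ρ hy)
  refine le_halfBallBarrier_of_eq_zero_on_flat hl hr
    (fun y hy => (odd_harm y hy.2).1.continuousAt.continuousWithinAt)
    (fun y _ hy => odd_harm y hy.le) (fun y hy => ?_) fun y _ hy => ?_
  · have hy_bound : |h (x + y)| ≤ S := hbound _ (mem_ball (.refl ℝ E) hy.2)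
    have hρy_bound : |h (x + ρ y)| ≤ S := hbound _ (mem_ball ρ hy.2)
    exact (abs_sub _ _).trans (by linarith)
  · have hρy : ρ y = y := Submodule.reflection_mem_subspace_eq_self
      (Submodule.mem_orthogonal_singleton_iff_inner_right.2 hy)
    rw [hρy, sub_self]

theorem fderiv_apply_le_of_harmonicOnNhd_closedBall {h : E → ℝ} {x l : E} {r S : ℝ}
    (hr : 0 < r) (hl : ‖l‖ = 1) (hharm : HarmonicOnNhd h (closedBall x r))
    (hbound : ∀ y ∈ closedBall x r, |h y| ≤ S) :
    fderiv ℝ h x l ≤ finrank ℝ E * S / r := by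
  let ρ : E ≃ₗᵢ[ℝ] E := (ℝ ∙ l)ᗮ.reflection
  have hρl : ρ l = -l := Submodule.reflection_orthogonalComplement_singleton_eq_neg l
  have hdiff : DifferentiableAt ℝ h x :=
    (hharm x (mem_closedBall_self hr.le)).1.differentiableAt two_ne_zero
  have comp_deriv (Φ : E ≃ₗᵢ[ℝ] E) :
      HasFDerivAt (fun y => h (x + Φ y)) ((fderiv ℝ h x).comp (Φ : E →L[ℝ] E)) 0 :=
    HasFDerivAt.comp 0 (by simpa using hdiff.hasFDerivAt) (Φ.hasFDerivAt.const_add x)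
  have hderiv := ((comp_deriv (.refl ℝ E)).sub (comp_deriv ρ)).sub
    ((hasFDerivAt_halfBallBarrier_zero l r).const_mul (2 * S / r ^ 2))
  have hnonpos := hasFDerivAt_apply_nonpos_of_nonpos_on_closedHalfBall hr hl hderiv
    (by simp [halfBallBarrier])
    fun y hy => sub_nonpos.2 (sub_reflection_le_halfBallBarrier hr hl hharm hbound y hy)
  have hnonpos' : fderiv ℝ h x l + fderiv ℝ h x l - 2 * S / r ^ 2 * (finrank ℝ E * r) ≤ 0 := by
    simpa [hρl, hl] using hnonpos
  have : 2 * S / r ^ 2 * (finrank ℝ E * r) = 2 * (finrank ℝ E * S / r) := by field_simp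
  linarith

theorem norm_fderiv_le_of_harmonicOnNhd_closedBall {h : E → ℝ} {x : E} {r S : ℝ}
    (hr : 0 < r) (hharm : HarmonicOnNhd h (closedBall x r))
    (hbound : ∀ y ∈ closedBall x r, |h y| ≤ S) :
    ‖fderiv ℝ h x‖ ≤ finrank ℝ E * S / r := by
  have hS : 0 ≤ S := (abs_nonneg _).trans (hbound x (mem_closedBall_self hr.le))
  refine ContinuousLinearMap.opNorm_le_of_unit_norm (by positivity) fun l hl => abs_le.2 ⟨?_, ?_⟩
  · have := fderiv_apply_le_of_harmonicOnNhd_closedBall hr (l := -l) (by simpa) hharm hbound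
    rw [map_neg] at this
    linarith
  · exact fderiv_apply_le_of_harmonicOnNhd_closedBall hr hl hharm hbound

end InteriorGradientEstimate

section Potential

variable {E F G : Type*} [NormedAddCommGroup E] [NormedAddCommGroup G] [TopologicalSpace F]

/-- The points at which a potential is as regular as its kernel is on `U`. -/
def potentialDomain (ι : F → E) (k : Set F) (U : Set E) : Set E := {x | ∀ y ∈ k, x - ι y ∈ U}

variable {ι : F → E} {k : Set F} {U : Set E}

theorem exists_eventually_norm_comp_sub_le (hι : Continuous ι) (hk : IsCompact k) (hU : IsOpen U)
    {φ : E → G} (hφ : ContinuousOn φ U) {x : E} (hx : x ∈ potentialDomain ι k U) :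
    ∃ C, ∀ᶠ x' in 𝓝 x, ∀ y ∈ k, x' - ι y ∈ U ∧ ‖φ (x' - ι y)‖ ≤ C := by
  have hcont : ContinuousOn (fun y => φ (x - ι y)) k := hφ.comp (by fun_prop) hx
  obtain ⟨C, hC⟩ := hk.exists_bound_of_continuousOn hcont
  refine ⟨C + 1, hk.eventually_forall_of_forall_eventually fun y hy => ?_⟩
  have hsub : Tendsto (fun z : E × F => z.1 - ι z.2) (𝓝 (x, y)) (𝓝 (x - ι y)) :=
    Continuous.tendsto (by fun_prop) _
  have hφ_norm := (hφ.continuousAt (hU.mem_nhds (hx y hy))).norm.eventually_lt_const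
    (lt_add_of_le_of_pos (hC y hy) one_pos)
  filter_upwards [hsub.eventually (hU.mem_nhds (hx y hy)), hsub.eventually hφ_norm] with z hz hz'
    using ⟨hz, hz'.le⟩

theorem isOpen_potentialDomain (hι : Continuous ι) (hk : IsCompact k) (hU : IsOpen U) :
    IsOpen (potentialDomain ι k U) := by
  refine isOpen_iff_mem_nhds.2 fun x hx => ?_
  obtain ⟨_, hC⟩ := exists_eventually_norm_comp_sub_le (φ := fun _ : E => (0 : ℝ)) hι hk hU
    continuousOn_const hx
  filter_upwards [hC] with x' hx' y hy using (hx' y hy).1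

variable [NormedSpace ℝ G] [MeasurableSpace F]

/-- The potential with kernel `φ` of the density `f` on the image of `k` under `ι`. -/
def potential (μ : Measure F) (ι : F → E) (k : Set F) (f : F → ℝ) (φ : E → G) (x : E) : G :=
  ∫ y in k, f y • φ (x - ι y) ∂μ

variable [T2Space F] [OpensMeasurableSpace F] [SecondCountableTopology F]
  {μ : Measure F} {f : F → ℝ}

theorem integrableOn_smul_comp_sub (hι : Continuous ι) (hk : IsCompact k)
    (hf : IntegrableOn f k μ) {φ : E → G} (hφ : ContinuousOn φ U) {x : E}
    (hx : x ∈ potentialDomain ι k U) : IntegrableOn (fun y => f y • φ (x - ι y)) k μ :=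
  hf.smul_continuousOn (hφ.comp (by fun_prop) hx) hk

theorem continuousOn_potential (hι : Continuous ι) (hk : IsCompact k) (hU : IsOpen U)
    (hf : IntegrableOn f k μ) {φ : E → G} (hφ : ContinuousOn φ U) :
    ContinuousOn (potential μ ι k f φ) (potentialDomain ι k U) := by
  refine fun x hx => ContinuousAt.continuousWithinAt ?_
  obtain ⟨C, hC⟩ := exists_eventually_norm_comp_sub_le hι hk hU hφ hx
  refine continuousAt_of_dominated (bound := fun y => |f y| * C) ?_ ?_ (hf.abs.mul_const C) ?_
  · filter_upwards [hC] with x' hx'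
    exact (integrableOn_smul_comp_sub hι hk hf hφ fun y hy => (hx' y hy).1).aestronglyMeasurable
  · filter_upwards [hC] with x' hx'
    filter_upwards [ae_restrict_mem hk.measurableSet] with y hy
    rw [norm_smul, norm_eq_abs]
    exact mul_le_mul_of_nonneg_left (hx' y hy).2 (abs_nonneg _)
  · filter_upwards [ae_restrict_mem hk.measurableSet] with y hy
    have hφ_at : ContinuousAt φ (x - ι y) := hφ.continuousAt (hU.mem_nhds (hx y hy))
    exact (hφ_at.comp (f := fun z => z - ι y) (by fun_prop)).const_smul (f y)

variable [NormedSpace ℝ E]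

theorem hasFDerivAt_potential (hι : Continuous ι) (hk : IsCompact k) (hU : IsOpen U)
    (hf : IntegrableOn f k μ) {φ : E → G} (hφ : ContDiffOn ℝ 1 φ U) {x : E}
    (hx : x ∈ potentialDomain ι k U) :
    HasFDerivAt (potential μ ι k f φ) (potential μ ι k f (fderiv ℝ φ) x) x := by
  have hφ' : ContinuousOn (fderiv ℝ φ) U := hφ.continuousOn_fderiv_of_isOpen hU le_rfl
  obtain ⟨C, hC⟩ := exists_eventually_norm_comp_sub_le hι hk hU hφ' hx
  refine hasFDerivAt_integral_of_dominated_of_fderiv_le (F := fun x y => f y • φ (x - ι y))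
    (F' := fun x y => f y • fderiv ℝ φ (x - ι y)) (bound := fun y => |f y| * C) hC ?_
    (integrableOn_smul_comp_sub hι hk hf hφ.continuousOn hx)
    (integrableOn_smul_comp_sub hι hk hf hφ' hx).aestronglyMeasurable ?_ (hf.abs.mul_const C) ?_
  · filter_upwards [hC] with x' hx'
    exact (integrableOn_smul_comp_sub hι hk hf hφ.continuousOn
      fun y hy => (hx' y hy).1).aestronglyMeasurable
  · filter_upwards [ae_restrict_mem hk.measurableSet] with y hy x' hx'
    rw [norm_smul, norm_eq_abs]
    exact mul_le_mul_of_nonneg_left (hx' y hy).2 (abs_nonneg _)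
  · filter_upwards [ae_restrict_mem hk.measurableSet] with y hy x' hx'
    have hφ_diff : DifferentiableAt ℝ φ (x' - ι y) :=
      (hφ.contDiffAt (hU.mem_nhds (hx' y hy).1)).differentiableAt one_ne_zero
    have hφ_deriv : HasFDerivAt (fun z => φ (z - ι y)) (fderiv ℝ φ (x' - ι y)) x' := by
      simpa [Function.comp_def] using
        hφ_diff.hasFDerivAt.comp x' ((hasFDerivAt_id x').sub_const (ι y))
    exact hφ_deriv.fun_const_smul (f y)

theorem eqOn_fderiv_potential (hι : Continuous ι) (hk : IsCompact k) (hU : IsOpen U)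
    (hf : IntegrableOn f k μ) {φ : E → G} (hφ : ContDiffOn ℝ 1 φ U) :
    Set.EqOn (fderiv ℝ (potential μ ι k f φ)) (potential μ ι k f (fderiv ℝ φ))
      (potentialDomain ι k U) :=
  fun _ hx => (hasFDerivAt_potential hι hk hU hf hφ hx).fderiv

theorem contDiffOn_add_one_potential (hι : Continuous ι) (hk : IsCompact k) (hU : IsOpen U)
    (hf : IntegrableOn f k μ) {φ : E → G} (hφ : ContDiffOn ℝ 1 φ U) {n : ℕ}
    (hpot : ContDiffOn ℝ n (potential μ ι k f (fderiv ℝ φ)) (potentialDomain ι k U)) :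
    ContDiffOn ℝ (n + 1) (potential μ ι k f φ) (potentialDomain ι k U) := by
  rw [contDiffOn_succ_iff_fderiv_of_isOpen (isOpen_potentialDomain hι hk hU)]
  exact ⟨fun x hx =>
    (hasFDerivAt_potential hι hk hU hf hφ hx).differentiableAt.differentiableWithinAt, by simp,
    hpot.congr (eqOn_fderiv_potential hι hk hU hf hφ)⟩

theorem contDiffOn_two_potential (hι : Continuous ι) (hk : IsCompact k) (hU : IsOpen U)
    (hf : IntegrableOn f k μ) {φ : E → G} (hφ : ContDiffOn ℝ 2 φ U) :
    ContDiffOn ℝ 2 (potential μ ι k f φ) (potentialDomain ι k U) := by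
  have hφ' : ContDiffOn ℝ 1 (fderiv ℝ φ) U := hφ.fderiv_of_isOpen hU (by norm_num)
  have hcont : ContDiffOn ℝ (0 : ℕ) (potential μ ι k f (fderiv ℝ (fderiv ℝ φ)))
      (potentialDomain ι k U) :=
    contDiffOn_zero.2 <|
      continuousOn_potential hι hk hU hf (hφ'.continuousOn_fderiv_of_isOpen hU le_rfl)
  have hderiv := contDiffOn_add_one_potential hι hk hU hf hφ' hcont
  exact contDiffOn_add_one_potential (n := 1) hι hk hU hf (hφ.of_le one_le_two)
    (by simpa using hderiv)

theorem fderiv_potential_apply {φ : E → ℝ} (hι : Continuous ι) (hk : IsCompact k) (hU : IsOpen U)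
    (hf : IntegrableOn f k μ) (hφ : ContDiffOn ℝ 1 φ U) (w : E) {x : E}
    (hx : x ∈ potentialDomain ι k U) :
    fderiv ℝ (potential μ ι k f φ) x w = potential μ ι k f (fun z => fderiv ℝ φ z w) x := by
  rw [eqOn_fderiv_potential hι hk hU hf hφ hx]
  exact ContinuousLinearMap.integral_apply
    (integrableOn_smul_comp_sub hι hk hf (hφ.continuousOn_fderiv_of_isOpen hU le_rfl) hx) w

end Potential

section HarmonicPotential

variable {E F : Type*} [NormedAddCommGroup E] [InnerProductSpace ℝ E] [FiniteDimensional ℝ E]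
  [TopologicalSpace F] [MeasurableSpace F] [T2Space F] [OpensMeasurableSpace F]
  [SecondCountableTopology F] {μ : Measure F} {ι : F → E} {k : Set F} {U : Set E} {f : F → ℝ}
  {φ : E → ℝ}

theorem laplacian_potential (hι : Continuous ι) (hk : IsCompact k) (hU : IsOpen U)
    (hf : IntegrableOn f k μ) (hφ : ContDiffOn ℝ 2 φ U) {x : E}
    (hx : x ∈ potentialDomain ι k U) :
    Δ (potential μ ι k f φ) x = potential μ ι k f (Δ φ) x := by
  let b := stdOrthonormalBasis ℝ E
  have hopen := isOpen_potentialDomain hι hk hU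
  have hφ' (w : E) : ContDiffOn ℝ 1 (fun z => fderiv ℝ φ z w) U :=
    (hφ.fderiv_of_isOpen hU (by norm_num)).clm_apply contDiffOn_const
  have hφ'' (w : E) : ContinuousOn (fun z => fderiv ℝ (fun z => fderiv ℝ φ z w) z w) U :=
    ((hφ' w).continuousOn_fderiv_of_isOpen hU le_rfl).clm_apply continuousOn_const
  have second_deriv (w : E) : fderiv ℝ (fun y => fderiv ℝ (potential μ ι k f φ) y w) x w
      = potential μ ι k f (fun z => fderiv ℝ (fun z => fderiv ℝ φ z w) z w) x := by
    have first_deriv : (fun y => fderiv ℝ (potential μ ι k f φ) y w) =ᶠ[𝓝 x]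
        potential μ ι k f (fun z => fderiv ℝ φ z w) := by
      filter_upwards [hopen.mem_nhds hx] with y hy
      exact fderiv_potential_apply hι hk hU hf (hφ.of_le one_le_two) w hy
    rw [first_deriv.fderiv_eq, fderiv_potential_apply hι hk hU hf (hφ' w) w hx]
  rw [laplacian_eq_sum_fderiv_fderiv b
    ((contDiffOn_two_potential hι hk hU hf hφ).contDiffAt (hopen.mem_nhds hx))]
  simp only [second_deriv, potential]
  rw [← integral_finsetSum _ fun i _ => integrableOn_smul_comp_sub hι hk hf (hφ'' (b i)) hx]
  refine setIntegral_congr_fun hk.measurableSet fun y hy => ?_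
  simp only [laplacian_eq_sum_fderiv_fderiv b (hφ.contDiffAt (hU.mem_nhds (hx y hy))),
    Finset.smul_sum]

theorem harmonicOnNhd_potential (hι : Continuous ι) (hk : IsCompact k) (hU : IsOpen U)
    (hf : IntegrableOn f k μ) (hφ : HarmonicOnNhd φ U) :
    HarmonicOnNhd (potential μ ι k f φ) (potentialDomain ι k U) := by
  have hopen := isOpen_potentialDomain hι hk hU
  have hC2 := contDiffOn_two_potential hι hk hU hf hφ.contDiffOn
  refine fun x hx => ⟨hC2.contDiffAt (hopen.mem_nhds hx), ?_⟩
  filter_upwards [hopen.mem_nhds hx] with z hz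
  rw [laplacian_potential hι hk hU hf hφ.contDiffOn hz]
  refine setIntegral_eq_zero_of_forall_eq_zero fun y hy => ?_
  rw [(hφ _ (hz y hy)).2.self_of_nhds, Pi.zero_apply, smul_zero]

end HarmonicPotential

section CentralProjection

open scoped ENNReal

theorem lintegral_comp_smul {E : Type*} [NormedAddCommGroup E] [NormedSpace ℝ E]
    [FiniteDimensional ℝ E] [MeasurableSpace E] [BorelSpace E] (μ : Measure E)
    [μ.IsAddHaarMeasure] (g : E → ℝ≥0∞) {r : ℝ} (hr : r ≠ 0) :
    ENNReal.ofReal (|r| ^ finrank ℝ E) * ∫⁻ x, g (r • x) ∂μ = ∫⁻ x, g x ∂μ := by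
  have hmap := lintegral_map_equiv (μ := μ) g (MeasurableEquiv.smul₀ r hr)
  simp only [MeasurableEquiv.coe_smul₀] at hmap
  rw [← hmap, Measure.map_addHaar_smul μ hr, lintegral_smul_measure, smul_eq_mul, ← mul_assoc,
    ← ENNReal.ofReal_mul (by positivity), abs_inv, abs_pow, mul_inv_cancel₀ (by positivity),
    ENNReal.ofReal_one, one_mul]

theorem setLIntegral_ball_abs_pow (m : ℕ) {ρ : ℝ} (hρ : 0 ≤ ρ) :
    ∫⁻ t in ball (0 : ℝ) ρ, ENNReal.ofReal (|t| ^ m)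
      = ENNReal.ofReal (2 / (m + 1) * ρ ^ (m + 1)) := by
  have hcont : Continuous fun t : ℝ => |t| ^ m := by fun_prop
  have hint : IntegrableOn (fun t : ℝ => |t| ^ m) (ball 0 ρ) :=
    (hcont.integrableOn_Icc (a := -ρ) (b := ρ)).mono_set <| by
      rw [Real.ball_eq_Ioo]
      simpa using Set.Ioo_subset_Icc_self
  rw [← ofReal_integral_eq_lintegral_ofReal hint (.of_forall fun _ => by positivity)]
  congr 1
  calc ∫ t in ball (0 : ℝ) ρ, |t| ^ m
      = ∫ t : ℝ, (Set.Iio ρ).indicator (fun s => s ^ m) |t| := by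
        rw [← integral_indicator measurableSet_ball]
        refine integral_congr_ae (.of_forall fun t => ?_)
        classical simp [Set.indicator_apply]
    _ = 2 * ∫ s in Set.Ioo 0 ρ, s ^ m := by
        rw [integral_comp_abs, setIntegral_indicator measurableSet_Iio, Set.Ioi_inter_Iio]
    _ = 2 / (m + 1) * ρ ^ (m + 1) := by
        rw [← integral_Ioc_eq_integral_Ioo, ← intervalIntegral.integral_of_le hρ, integral_pow]
        rw [zero_pow m.succ_ne_zero]
        ring

variable {F : Type*} [NormedAddCommGroup F]

/-- The unit normal to the boundary hyperplane `{0} × F` of the half-space. -/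
def upNormal (F : Type*) [NormedAddCommGroup F] : WithLp 2 (ℝ × F) := WithLp.toLp 2 (1, 0)

/-- The point above `y` in the hyperplane at height one: the central projection from the origin
identifies almost all lines through the origin with these points. -/
def liftOne (y : F) : WithLp 2 (ℝ × F) := WithLp.toLp 2 (1, y)

theorem norm_upNormal : ‖upNormal F‖ = 1 := by simp [upNormal]

theorem normSq_liftOne (y : F) : ‖liftOne y‖ ^ 2 = 1 + ‖y‖ ^ 2 := by
  simp [liftOne, WithLp.prod_norm_sq_eq_of_L2]

theorem liftOne_ne_zero (y : F) : liftOne y ≠ 0 := fun h => by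
  simpa [liftOne] using congr_arg (WithLp.fst) h

@[fun_prop]
theorem continuous_liftOne : Continuous (liftOne : F → WithLp 2 (ℝ × F)) := by
  unfold liftOne
  fun_prop

variable [InnerProductSpace ℝ F]

theorem smul_liftOne (t : ℝ) (y : F) : t • liftOne y = WithLp.toLp 2 (t, t • y) := by
  simp [liftOne, ← WithLp.toLp_smul]

theorem inner_upNormal (x : WithLp 2 (ℝ × F)) : ⟪upNormal F, x⟫ = x.fst := by
  simp [upNormal, WithLp.prod_inner_apply]

variable [FiniteDimensional ℝ F]

theorem finrank_withLp_real_prod : finrank ℝ (WithLp 2 (ℝ × F)) = finrank ℝ F + 1 := by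
  rw [(WithLp.linearEquiv 2 ℝ (ℝ × F)).finrank_eq, finrank_prod, finrank_self, add_comm]

theorem dipole_upNormal_liftOne (y : F) :
    dipole (upNormal F) (liftOne y) = (1 + ‖y‖ ^ 2) ^ (-(finrank ℝ F + 1 : ℝ) / 2) := by
  rw [dipole, inner_upNormal, normSq_liftOne, finrank_withLp_real_prod, Nat.cast_add_one]
  exact one_mul _

theorem inv_norm_liftOne_pow (y : F) :
    ‖liftOne y‖⁻¹ ^ (finrank ℝ F + 1) = dipole (upNormal F) (liftOne y) := by
  rw [dipole_upNormal_liftOne, ← normSq_liftOne, neg_div, rpow_neg (by positivity),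
    rpow_div_two_eq_sqrt _ (by positivity), sqrt_sq (norm_nonneg _), inv_pow]
  norm_cast

theorem dipole_upNormal_liftOne_pos (y : F) : 0 < dipole (upNormal F) (liftOne y) := by
  rw [dipole_upNormal_liftOne]
  positivity

@[fun_prop]
theorem continuous_dipole_upNormal_liftOne :
    Continuous fun y : F => dipole (upNormal F) (liftOne y) := by
  simp only [dipole_upNormal_liftOne]
  exact Continuous.rpow_const (by fun_prop) fun y => Or.inl (by positivity)

variable [MeasurableSpace F] [BorelSpace F]

theorem lintegral_eq_lintegral_smul_liftOne {g : WithLp 2 (ℝ × F) → ℝ≥0∞} (hg : Measurable g) :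
    ∫⁻ x, g x = ∫⁻ y : F, ∫⁻ t : ℝ, ENNReal.ofReal (|t| ^ finrank ℝ F) * g (t • liftOne y) := by
  have hmeas : Measurable fun q : ℝ × F =>
      ENNReal.ofReal (|q.1| ^ finrank ℝ F) * g (q.1 • liftOne q.2) := by
    have hsmul : Measurable fun q : ℝ × F => q.1 • liftOne q.2 :=
      Continuous.measurable (by fun_prop)
    exact Measurable.mul (by fun_prop) (hg.comp hsmul)
  have htoLp : Measurable (WithLp.toLp 2 : ℝ × F → WithLp 2 (ℝ × F)) := by fun_prop
  have scaled_slice (t : ℝ) (ht : t ≠ 0) : ∫⁻ y : F, g (WithLp.toLp 2 (t, y))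
      = ∫⁻ y : F, ENNReal.ofReal (|t| ^ finrank ℝ F) * g (t • liftOne y) := by
    simp only [smul_liftOne]
    rw [← lintegral_comp_smul volume _ ht, lintegral_const_mul]
    fun_prop
  calc ∫⁻ x, g x = ∫⁻ q : ℝ × F, g (WithLp.toLp 2 q) :=
        ((WithLp.volume_preserving_toLp ℝ F).lintegral_comp hg).symm
    _ = ∫⁻ t : ℝ, ∫⁻ y : F, g (WithLp.toLp 2 (t, y)) :=
        lintegral_prod _ (hg.comp htoLp).aemeasurable
    _ = ∫⁻ t : ℝ, ∫⁻ y : F, ENNReal.ofReal (|t| ^ finrank ℝ F) * g (t • liftOne y) :=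
        lintegral_congr_ae ((Measure.ae_ne volume 0).mono scaled_slice)
    _ = _ := lintegral_lintegral_swap hmeas.aemeasurable

theorem setLIntegral_ball_of_homogeneous {g : WithLp 2 (ℝ × F) → ℝ≥0∞} (hg : Measurable g)
    (hhom : ∀ t : ℝ, t ≠ 0 → ∀ x, g (t • x) = g x) :
    ∫⁻ x in ball 0 1, g x = ENNReal.ofReal (2 / (finrank ℝ F + 1)) *
      ∫⁻ y : F, g (liftOne y) * ENNReal.ofReal (dipole (upNormal F) (liftOne y)) := by
  rw [← lintegral_indicator measurableSet_ball,
    lintegral_eq_lintegral_smul_liftOne (hg.indicator measurableSet_ball), ← lintegral_const_mul']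
  · refine lintegral_congr fun y => ?_
    have hy : 0 < ‖liftOne y‖ := norm_pos_iff.2 (liftOne_ne_zero y)
    have ray : ∀ᵐ t : ℝ,
        ENNReal.ofReal (|t| ^ finrank ℝ F) * (ball 0 1).indicator g (t • liftOne y)
          = (ball 0 ‖liftOne y‖⁻¹).indicator
            (fun t => ENNReal.ofReal (|t| ^ finrank ℝ F)) t * g (liftOne y) := by
      filter_upwards [Measure.ae_ne volume 0] with t ht
      classical simp [Set.indicator_apply, norm_smul, hhom t ht, ← one_div, lt_div_iff₀ hy]
    rw [lintegral_congr_ae ray, lintegral_mul_const, lintegral_indicator measurableSet_ball,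
      setLIntegral_ball_abs_pow _ (by positivity), inv_norm_liftOne_pow,
      ENNReal.ofReal_mul (by positivity)]
    · ring
    · exact Measurable.indicator (by fun_prop) measurableSet_ball
  · exact ENNReal.ofReal_ne_top

theorem integrable_dipole_upNormal_liftOne :
    Integrable fun y : F => dipole (upNormal F) (liftOne y) := by
  simp only [dipole_upNormal_liftOne]
  exact integrable_rpow_neg_one_add_norm_sq (lt_add_one _)

theorem integral_ball_of_homogeneous {g : WithLp 2 (ℝ × F) → ℝ} (hg : Measurable g)
    (hnonneg : ∀ x, 0 ≤ g x) (hhom : ∀ t : ℝ, t ≠ 0 → ∀ x, g (t • x) = g x) :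
    ∫ x in ball 0 1, g x = 2 / (finrank ℝ F + 1) *
      ∫ y : F, g (liftOne y) * dipole (upNormal F) (liftOne y) := by
  have hprod (y : F) : 0 ≤ g (liftOne y) * dipole (upNormal F) (liftOne y) :=
    mul_nonneg (hnonneg _) (dipole_upNormal_liftOne_pos y).le
  have hmeas : Measurable fun y : F => g (liftOne y) * dipole (upNormal F) (liftOne y) :=
    (hg.comp continuous_liftOne.measurable).mul continuous_dipole_upNormal_liftOne.measurable
  rw [integral_eq_lintegral_of_nonneg_ae (.of_forall hnonneg) hg.aestronglyMeasurable,
    integral_eq_lintegral_of_nonneg_ae (.of_forall hprod) hmeas.aestronglyMeasurable,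
    setLIntegral_ball_of_homogeneous hg.ennreal_ofReal fun t ht x => by rw [hhom t ht],
    ENNReal.toReal_mul, ENNReal.toReal_ofReal (by positivity)]
  simp only [ENNReal.ofReal_mul (hnonneg _)]

end CentralProjection

section SphereArea

theorem sphereArea_succ_pos (m : ℕ) : 0 < sphereArea (m + 1) := by
  have : 0 < Gamma ((m + 1 : ℕ) / 2) := Gamma_pos_of_pos (by positivity)
  unfold sphereArea
  positivity

variable {E : Type*} [NormedAddCommGroup E] [InnerProductSpace ℝ E] [FiniteDimensional ℝ E]
  [Nontrivial E] [MeasurableSpace E] [BorelSpace E]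

theorem sphereArea_finrank :
    sphereArea (finrank ℝ E) = finrank ℝ E * volume.real (ball (0 : E) 1) := by
  have hdim : (0 : ℝ) < finrank ℝ E := by exact_mod_cast finrank_pos
  rw [measureReal_def, InnerProductSpace.volume_ball, ENNReal.ofReal_one, one_pow, one_mul,
    ENNReal.toReal_ofReal (by positivity), Gamma_add_one (by positivity), sphereArea,
    rpow_div_two_eq_sqrt _ pi_pos.le, rpow_natCast]
  field_simp

theorem integral_fun_norm_eq_sphereArea_mul (g : ℝ → ℝ) :
    ∫ x : E, g ‖x‖ = sphereArea (finrank ℝ E) *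
      ∫ r in Set.Ioi (0 : ℝ), r ^ (finrank ℝ E - 1) * g r := by
  rw [integral_fun_norm_addHaar, sphereArea_finrank, nsmul_eq_mul, smul_eq_mul, mul_assoc]
  rfl

theorem integral_dipole_upNormal_liftOne {F : Type*} [NormedAddCommGroup F]
    [InnerProductSpace ℝ F] [FiniteDimensional ℝ F] [MeasurableSpace F] [BorelSpace F] :
    ∫ y : F, dipole (upNormal F) (liftOne y) = sphereArea (finrank ℝ F + 1) / 2 := by
  have : Nontrivial (WithLp 2 (ℝ × F)) := ⟨upNormal F, 0, fun h => by
    simpa [h] using norm_upNormal (F := F)⟩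
  have hball := integral_ball_of_homogeneous (F := F) (g := fun _ => 1) measurable_const
    (fun _ => zero_le_one) fun _ _ _ => rfl
  have harea := sphereArea_finrank (E := WithLp 2 (ℝ × F))
  simp only [finrank_withLp_real_prod, Nat.cast_add_one] at harea
  simp only [one_mul, setIntegral_const, smul_eq_mul, mul_one] at hball
  rw [harea, hball]
  field_simp

end SphereArea

section DipoleSlope

variable {E : Type*} [NormedAddCommGroup E] [InnerProductSpace ℝ E]

/-- The degree-zero homogeneous factor of the derivative of `dipole e` in the direction `l`. -/
def dipoleSlope (e l x : E) : ℝ := ⟪e, l⟫ - finrank ℝ E * (⟪e, x⟫ * ⟪l, x⟫ / ‖x‖ ^ 2)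

theorem dipoleSlope_smul (e l x : E) {t : ℝ} (ht : t ≠ 0) :
    dipoleSlope e l (t • x) = dipoleSlope e l x := by
  simp only [dipoleSlope, real_inner_smul_right, norm_smul, norm_eq_abs, mul_pow, sq_abs]
  rw [show t * ⟪e, x⟫ * (t * ⟪l, x⟫) = t ^ 2 * (⟪e, x⟫ * ⟪l, x⟫) by ring,
    mul_div_mul_left _ _ (pow_ne_zero 2 ht)]

theorem dipoleSlope_smul_self (r : ℝ) (e x : E) :
    dipoleSlope (r • e) (r • e) x = r ^ 2 * dipoleSlope e e x := by
  simp only [dipoleSlope, real_inner_smul_left, real_inner_smul_right]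
  ring

theorem dipoleSlope_map (Φ : E ≃ₗᵢ[ℝ] E) (e l x : E) :
    dipoleSlope (Φ e) (Φ l) (Φ x) = dipoleSlope e l x := by
  simp only [dipoleSlope, LinearIsometryEquiv.inner_map_map, LinearIsometryEquiv.norm_map]

theorem dipoleSlope_eq_sub (e l x : E) :
    dipoleSlope e l x = dipoleSlope ((1 / 2 : ℝ) • (e + l)) ((1 / 2 : ℝ) • (e + l)) x
      - dipoleSlope ((1 / 2 : ℝ) • (e - l)) ((1 / 2 : ℝ) • (e - l)) x := by
  rw [dipoleSlope_smul_self, dipoleSlope_smul_self]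
  simp only [dipoleSlope, inner_add_left, inner_add_right, inner_sub_left, inner_sub_right,
    real_inner_comm e l]
  ring

theorem abs_dipoleSlope_le (e l x : E) :
    |dipoleSlope e l x| ≤ (1 + finrank ℝ E) * (‖e‖ * ‖l‖) := by
  have hquot : |⟪e, x⟫ * ⟪l, x⟫ / ‖x‖ ^ 2| ≤ ‖e‖ * ‖l‖ := by
    rw [abs_div, abs_mul, abs_of_nonneg (sq_nonneg ‖x‖)]
    refine div_le_of_le_mul₀ (by positivity) (by positivity) ?_
    calc |⟪e, x⟫| * |⟪l, x⟫| ≤ ‖e‖ * ‖x‖ * (‖l‖ * ‖x‖) := by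
          gcongr <;> exact abs_real_inner_le_norm _ _
      _ = ‖e‖ * ‖l‖ * ‖x‖ ^ 2 := by ring
  calc |dipoleSlope e l x|
      ≤ |⟪e, l⟫| + |finrank ℝ E * (⟪e, x⟫ * ⟪l, x⟫ / ‖x‖ ^ 2)| := abs_sub _ _
    _ ≤ ‖e‖ * ‖l‖ + finrank ℝ E * (‖e‖ * ‖l‖) := by
        rw [abs_mul, Nat.abs_cast]
        gcongr
        exact abs_real_inner_le_norm e l
    _ = (1 + finrank ℝ E) * (‖e‖ * ‖l‖) := by ring

theorem fderiv_dipole_apply (e l : E) {x : E} (hx : x ≠ 0) :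
    fderiv ℝ (dipole e) x l = dipoleSlope e l x * (‖x‖ ^ 2) ^ (-(finrank ℝ E : ℝ) / 2) := by
  have hx' : 0 < ‖x‖ ^ 2 := by positivity
  refine (congr_arg (· l) (hasFDerivAt_inner_mul_normSq_rpow e _ hx).fderiv).trans ?_
  simp only [add_apply, smul_apply, coe_innerSL_apply, smul_eq_mul, rpow_sub_one hx'.ne',
    dipoleSlope, real_inner_comm x l]
  ring

theorem exists_linearIsometryEquiv_apply_eq {v w : E} (h : ‖v‖ = ‖w‖) :
    ∃ Φ : E ≃ₗᵢ[ℝ] E, Φ v = w := ⟨_, Submodule.reflection_sub h⟩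

variable [MeasurableSpace E] [BorelSpace E]

@[fun_prop]
theorem measurable_dipoleSlope (e l : E) : Measurable (dipoleSlope e l) := by
  unfold dipoleSlope
  have hinner (w : E) : Measurable fun x : E => ⟪w, x⟫ := Continuous.measurable (by fun_prop)
  fun_prop

variable [FiniteDimensional ℝ E]

theorem integrableOn_ball_dipoleSlope (e l : E) :
    IntegrableOn (dipoleSlope e l) (ball 0 1) :=
  Measure.integrableOn_of_bounded measure_ball_lt_top.ne
    (measurable_dipoleSlope e l).aestronglyMeasurable (.of_forall (abs_dipoleSlope_le e l))

theorem integral_ball_abs_dipoleSlope_self {e : E} (he : ‖e‖ = 1) (a : E) :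
    ∫ x in ball 0 1, |dipoleSlope a a x| = ‖a‖ ^ 2 * ∫ x in ball 0 1, |dipoleSlope e e x| := by
  obtain ⟨Φ, hΦ⟩ := exists_linearIsometryEquiv_apply_eq (v := ‖a‖ • e) (w := a)
    (by simp [norm_smul, he])
  have hpre : Φ ⁻¹' ball 0 1 = ball 0 1 := by
    ext x
    simp
  have hrot := Φ.measurePreserving.setIntegral_preimage_emb
    Φ.toHomeomorph.measurableEmbedding (fun x => |dipoleSlope a a x|) (ball 0 1)
  rw [← hrot, hpre, ← integral_const_mul]
  congr with x
  conv_lhs => rw [← hΦ]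
  rw [dipoleSlope_map, dipoleSlope_smul_self, abs_mul, abs_sq]

/-- The polarization of the symmetric bilinear form `(e, l) ↦ dipoleSlope e l` reduces the general
direction `l` to the normal one. -/
theorem integral_ball_abs_dipoleSlope_le {e l : E} (he : ‖e‖ = 1) (hl : ‖l‖ = 1) :
    ∫ x in ball 0 1, |dipoleSlope e l x| ≤ ∫ x in ball 0 1, |dipoleSlope e e x| := by
  have hint (a b : E) : IntegrableOn (fun x => |dipoleSlope a b x|) (ball 0 1) :=
    (integrableOn_ball_dipoleSlope a b).abs
  set p : E := (1 / 2 : ℝ) • (e + l)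
  set q : E := (1 / 2 : ℝ) • (e - l)
  have hpq : ‖p‖ ^ 2 + ‖q‖ ^ 2 = 1 := by
    have := parallelogram_law_with_norm ℝ e l
    simp only [p, q, norm_smul, mul_pow, he, hl] at this ⊢
    norm_num
    linarith
  calc ∫ x in ball 0 1, |dipoleSlope e l x|
      ≤ ∫ x in ball 0 1, (|dipoleSlope p p x| + |dipoleSlope q q x|) := by
        refine integral_mono (hint e l) ((hint p p).add (hint q q)) fun x => ?_
        simpa only [dipoleSlope_eq_sub e l x] using abs_sub _ _
    _ = (‖p‖ ^ 2 + ‖q‖ ^ 2) * ∫ x in ball 0 1, |dipoleSlope e e x| := by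
        rw [integral_add (hint p p) (hint q q), integral_ball_abs_dipoleSlope_self he p,
          integral_ball_abs_dipoleSlope_self he q, add_mul]
    _ = ∫ x in ball 0 1, |dipoleSlope e e x| := by rw [hpq, one_mul]

end DipoleSlope

section UnimodalIntegral

theorem integral_Ioi_abs_deriv_of_unimodal {A A' : ℝ → ℝ} {s : ℝ} (hs : 0 ≤ s) (hA0 : A 0 = 0)
    (hderiv : ∀ r, HasDerivAt A (A' r) r) (hincr : ∀ r ∈ Set.Ioo 0 s, 0 ≤ A' r)
    (hdecr : ∀ r ∈ Set.Ioi s, A' r ≤ 0) (hlim : Tendsto A atTop (𝓝 0)) :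
    ∫ r in Set.Ioi 0, |A' r| = 2 * A s := by
  have hcont : ContinuousOn A (Set.Icc 0 s) := fun r _ => (hderiv r).continuousAt.continuousWithinAt
  have hint_left : IntegrableOn A' (Set.Ioc 0 s) :=
    intervalIntegral.integrableOn_deriv_of_nonneg hcont (fun r _ => hderiv r) hincr
  have hint_right : IntegrableOn A' (Set.Ioi s) :=
    integrableOn_Ioi_deriv_of_nonpos' (fun r _ => hderiv r) hdecr hlim
  have hleft : ∫ r in Set.Ioc 0 s, |A' r| = A s := by
    calc ∫ r in Set.Ioc 0 s, |A' r| = ∫ r in Set.Ioo 0 s, |A' r| := integral_Ioc_eq_integral_Ioo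
      _ = ∫ r in Set.Ioo 0 s, A' r :=
          setIntegral_congr_fun measurableSet_Ioo fun r hr => abs_of_nonneg (hincr r hr)
      _ = ∫ r in (0)..s, A' r := by
          rw [← integral_Ioc_eq_integral_Ioo, intervalIntegral.integral_of_le hs]
      _ = A s - A 0 := intervalIntegral.integral_eq_sub_of_hasDerivAt (fun r _ => hderiv r)
          ((intervalIntegrable_iff_integrableOn_Ioc_of_le hs).2 hint_left)
      _ = A s := by rw [hA0, sub_zero]
  have hright : ∫ r in Set.Ioi s, |A' r| = A s := by
    rw [setIntegral_congr_fun measurableSet_Ioi fun r hr => abs_of_nonpos (hdecr r hr),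
      integral_neg, integral_Ioi_of_hasDerivAt_of_nonpos' (fun r _ => hderiv r) hdecr hlim]
    ring
  rw [← Set.Ioc_union_Ioi_eq_Ioi hs, setIntegral_union Set.Ioc_disjoint_Ioi_same measurableSet_Ioi
    hint_left.abs hint_right.abs, hleft, hright]
  ring

theorem hasDerivAt_pow_mul_one_add_sq_rpow {m : ℕ} (hm : m ≠ 0) (r : ℝ) :
    HasDerivAt (fun r : ℝ => r ^ m * (1 + r ^ 2) ^ (-(m + 1 : ℝ) / 2))
      (r ^ (m - 1) * ((1 + r ^ 2) ^ (-(m + 1 : ℝ) / 2) * ((m - r ^ 2) / (1 + r ^ 2)))) r := by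
  have hbase : HasDerivAt (fun r : ℝ => 1 + r ^ 2) (2 * r) r := by
    simpa using (hasDerivAt_pow 2 r).const_add (1 : ℝ)
  have hpos : (0 : ℝ) < 1 + r ^ 2 := by positivity
  convert! (hasDerivAt_pow m r).fun_mul (hbase.rpow_const (Or.inl hpos.ne')) using 1
  obtain ⟨k, rfl⟩ := Nat.exists_eq_add_one_of_ne_zero hm
  rw [rpow_sub_one hpos.ne', Nat.add_sub_cancel, pow_succ]
  field_simp
  push_cast
  ring

theorem tendsto_pow_mul_one_add_sq_rpow_atTop (m : ℕ) :
    Tendsto (fun r : ℝ => r ^ m * (1 + r ^ 2) ^ (-(m + 1 : ℝ) / 2)) atTop (𝓝 0) := by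
  refine squeeze_zero' ?_ ?_ tendsto_inv_atTop_zero
  · filter_upwards [eventually_ge_atTop 0] with r hr
    positivity
  · filter_upwards [eventually_gt_atTop 0] with r hr
    calc r ^ m * (1 + r ^ 2) ^ (-(m + 1 : ℝ) / 2)
        ≤ r ^ m * (r ^ 2) ^ (-(m + 1 : ℝ) / 2) := by
          gcongr r ^ m * ?_
          exact rpow_le_rpow_of_nonpos (by positivity) (by linarith)
            (div_nonpos_of_nonpos_of_nonneg (by linarith [m.cast_nonneg (α := ℝ)]) two_pos.le)
      _ = r⁻¹ := by
          rw [neg_div, rpow_neg (by positivity), rpow_div_two_eq_sqrt _ (by positivity),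
            sqrt_sq hr.le, ← Nat.cast_add_one, rpow_natCast, pow_succ]
          field_simp

theorem integral_radial_slope {m : ℕ} (hm : m ≠ 0) :
    ∫ r in Set.Ioi (0 : ℝ), r ^ (m - 1) *
        (|1 - (m + 1) / (1 + r ^ 2)| * (1 + r ^ 2) ^ (-(m + 1 : ℝ) / 2))
      = 2 * (m ^ (m / 2 : ℝ) * (m + 1 : ℝ) ^ (-(m + 1 : ℝ) / 2)) := by
  have hsq : √(m : ℝ) ^ 2 = m := sq_sqrt (by positivity)
  have hunimodal := integral_Ioi_abs_deriv_of_unimodal (sqrt_nonneg (m : ℝ)) (by simp [hm])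
    (hasDerivAt_pow_mul_one_add_sq_rpow hm) (fun r hr => ?_) (fun r hr => ?_)
    (tendsto_pow_mul_one_add_sq_rpow_atTop m)
  · rw [hsq, ← rpow_natCast (√(m : ℝ)), ← rpow_div_two_eq_sqrt _ (by positivity),
      add_comm 1 (m : ℝ)] at hunimodal
    rw [← hunimodal]
    refine setIntegral_congr_fun measurableSet_Ioi fun r hr => ?_
    have hslope : 1 - (m + 1 : ℝ) / (1 + r ^ 2) = -((m - r ^ 2) / (1 + r ^ 2)) := by
      field_simp
      ring
    have hpow : 0 ≤ r ^ (m - 1) := pow_nonneg (le_of_lt hr) _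
    have hbracket : 0 ≤ (1 + r ^ 2) ^ (-(m + 1 : ℝ) / 2) := by positivity
    rw [hslope, abs_neg, abs_mul, abs_mul, abs_of_nonneg hpow, abs_of_nonneg hbracket]
    ring
  · have hr0 := hr.1
    have : 0 ≤ m - r ^ 2 := by nlinarith [hr.2, sqrt_nonneg (m : ℝ)]
    positivity
  · have hsqrt : √(m : ℝ) < r := hr
    have hr0 : 0 < r := (sqrt_nonneg _).trans_lt hsqrt
    have hneg : m - r ^ 2 ≤ 0 := by nlinarith [sqrt_nonneg (m : ℝ)]
    exact mul_nonpos_of_nonneg_of_nonpos (by positivity) <|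
      mul_nonpos_of_nonneg_of_nonpos (by positivity) <|
        div_nonpos_of_nonpos_of_nonneg hneg (by positivity)

end UnimodalIntegral

section PoissonKernelSlope

variable {F : Type*} [NormedAddCommGroup F] [InnerProductSpace ℝ F] [FiniteDimensional ℝ F]
  [MeasurableSpace F] [BorelSpace F]

theorem integral_abs_dipoleSlope_upNormal_liftOne [Nontrivial F] :
    ∫ y : F, |dipoleSlope (upNormal F) (upNormal F) (liftOne y)|
        * dipole (upNormal F) (liftOne y)
      = Cconst (finrank ℝ F + 1) * (sphereArea (finrank ℝ F + 1) / 2) := by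
  have slope (y : F) : dipoleSlope (upNormal F) (upNormal F) (liftOne y)
      = 1 - (finrank ℝ F + 1) / (1 + ‖y‖ ^ 2) := by
    rw [dipoleSlope, inner_upNormal, inner_upNormal, normSq_liftOne, finrank_withLp_real_prod]
    simp [upNormal, liftOne, div_eq_mul_inv]
  have hω := sphereArea_succ_pos (finrank ℝ F)
  simp only [slope, dipole_upNormal_liftOne]
  rw [integral_fun_norm_eq_sphereArea_mul fun r =>
      |1 - (finrank ℝ F + 1) / (1 + r ^ 2)| * (1 + r ^ 2) ^ (-(finrank ℝ F + 1 : ℝ) / 2),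
    integral_radial_slope finrank_pos.ne', Cconst, neg_div, rpow_neg (by positivity)]
  simp only [Nat.cast_add_one, add_sub_cancel_right, Nat.add_sub_cancel]
  field_simp
  ring

theorem integral_abs_dipoleSlope_liftOne_le [Nontrivial F] {l : WithLp 2 (ℝ × F)} (hl : ‖l‖ = 1) :
    ∫ y : F, |dipoleSlope (upNormal F) l (liftOne y)| * dipole (upNormal F) (liftOne y)
      ≤ Cconst (finrank ℝ F + 1) * (sphereArea (finrank ℝ F + 1) / 2) := by
  have central (l : WithLp 2 (ℝ × F)) := integral_ball_of_homogeneous (F := F)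
    (g := fun x => |dipoleSlope (upNormal F) l x|) (measurable_dipoleSlope _ l).abs
    (fun _ => abs_nonneg _) fun t ht x => by rw [dipoleSlope_smul _ _ _ ht]
  have hle := integral_ball_abs_dipoleSlope_le (norm_upNormal (F := F)) hl
  rw [central, central] at hle
  rw [← integral_abs_dipoleSlope_upNormal_liftOne]
  exact le_of_mul_le_mul_left hle (by positivity)

end PoissonKernelSlope

section PoissonIntegral

variable {F : Type*} [NormedAddCommGroup F]

/-- The point of the boundary hyperplane of the half-space with coordinate `y`. -/
def boundaryPoint (y : F) : WithLp 2 (ℝ × F) := WithLp.toLp 2 (0, y)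

@[fun_prop]
theorem continuous_boundaryPoint : Continuous (boundaryPoint : F → WithLp 2 (ℝ × F)) := by
  unfold boundaryPoint
  fun_prop

theorem mem_potentialDomain_boundaryPoint_of_fst_pos (k : Set F) {x : WithLp 2 (ℝ × F)}
    (hx : 0 < x.fst) : x ∈ potentialDomain boundaryPoint k {w | w ≠ 0} := fun y _ h => by
  have hfst := congr_arg WithLp.fst h
  simp only [boundaryPoint, WithLp.sub_fst, WithLp.toLp_fst, WithLp.zero_fst, sub_zero] at hfst
  exact hx.ne' hfst

theorem isOpen_fst_pos : IsOpen {x : WithLp 2 (ℝ × F) | 0 < x.fst} :=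
  isOpen_lt continuous_const (by fun_prop)

theorem normSq_smul_rpow {E : Type*} [NormedAddCommGroup E] [NormedSpace ℝ E] {s : ℝ}
    (hs : 0 < s) (a : ℝ) (x : E) :
    (‖s • x‖ ^ 2) ^ (-a / 2) = s ^ (-a) * (‖x‖ ^ 2) ^ (-a / 2) := by
  rw [norm_smul, mul_pow, mul_rpow (by positivity) (by positivity), norm_of_nonneg hs.le,
    ← rpow_natCast, ← rpow_mul hs.le]
  congr 2
  push_cast
  ring

variable [InnerProductSpace ℝ F]

theorem sub_boundaryPoint_sub_smul (x : WithLp 2 (ℝ × F)) (z : F) :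
    x - boundaryPoint (x.snd - x.fst • z) = x.fst • liftOne z := by
  rw [smul_liftOne]
  refine WithLp.ofLp_injective 2 (Prod.ext ?_ ?_) <;> simp [boundaryPoint]

variable [FiniteDimensional ℝ F]

theorem pow_mul_dipole_smul (e x : WithLp 2 (ℝ × F)) {s : ℝ} (hs : 0 < s) :
    s ^ finrank ℝ F * dipole e (s • x) = dipole e x := by
  rw [dipole, dipole, normSq_smul_rpow hs, real_inner_smul_right, finrank_withLp_real_prod,
    rpow_neg hs.le, rpow_natCast, pow_succ]
  field_simp

theorem pow_mul_fderiv_dipole_smul_liftOne (l : WithLp 2 (ℝ × F)) {s : ℝ} (hs : 0 < s) (z : F) :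
    s ^ finrank ℝ F * fderiv ℝ (dipole (upNormal F)) (s • liftOne z) l
      = s⁻¹ * (dipoleSlope (upNormal F) l (liftOne z) * dipole (upNormal F) (liftOne z)) := by
  rw [fderiv_dipole_apply _ _ (smul_ne_zero hs.ne' (liftOne_ne_zero z)), normSq_smul_rpow hs,
    dipoleSlope_smul _ _ _ hs.ne', dipole_upNormal_liftOne, normSq_liftOne,
    finrank_withLp_real_prod, rpow_neg hs.le, rpow_natCast, pow_succ, Nat.cast_add_one]
  field_simp

variable [MeasurableSpace F] [BorelSpace F]

theorem integral_eq_pow_mul_integral_comp_sub_smul (g : F → ℝ) (a : F) {s : ℝ} (hs : 0 < s) :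
    ∫ y, g y = s ^ finrank ℝ F * ∫ z, g (a - s • z) := by
  rw [Measure.integral_comp_smul volume (fun y => g (a - y)) s, integral_sub_left_eq_self,
    smul_eq_mul, abs_of_pos (by positivity), mul_inv_cancel_left₀ (by positivity)]

theorem potential_boundaryPoint_eq_integral_liftOne {f : F → ℝ} {k : Set F}
    (hfk : ∀ y ∉ k, f y = 0) (φ : WithLp 2 (ℝ × F) → ℝ) {x : WithLp 2 (ℝ × F)} (hx : 0 < x.fst) :
    potential volume boundaryPoint k f φ x
      = ∫ z : F, f (x.snd - x.fst • z) * (x.fst ^ finrank ℝ F * φ (x.fst • liftOne z)) := by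
  rw [potential, setIntegral_eq_integral_of_forall_compl_eq_zero fun y hy => by simp [hfk y hy],
    integral_eq_pow_mul_integral_comp_sub_smul _ x.snd hx, ← integral_const_mul]
  simp only [sub_boundaryPoint_sub_smul, smul_eq_mul]
  congr with z
  ring

/-- The Poisson integral of `f` over the boundary of the half-space `0 < x.fst`, in the variable
`z` with `y = x.snd - x.fst • z`, so that the formula makes sense on the boundary too. -/
def poissonIntegral (f : F → ℝ) (x : WithLp 2 (ℝ × F)) : ℝ :=
  2 / sphereArea (finrank ℝ F + 1) *
    ∫ z : F, f (x.snd - x.fst • z) * dipole (upNormal F) (liftOne z)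

variable {f : F → ℝ} {S : ℝ}

theorem poissonIntegral_of_fst_eq_zero (f : F → ℝ) {x : WithLp 2 (ℝ × F)} (hx : x.fst = 0) :
    poissonIntegral f x = f x.snd := by
  have hω := sphereArea_succ_pos (finrank ℝ F)
  simp only [poissonIntegral, hx, zero_smul, sub_zero, integral_const_mul,
    integral_dipole_upNormal_liftOne]
  field_simp

theorem abs_poissonIntegral_le (hS : ∀ y, |f y| ≤ S) (x : WithLp 2 (ℝ × F)) :
    |poissonIntegral f x| ≤ S := by
  have hω := sphereArea_succ_pos (finrank ℝ F)
  have hbound := norm_integral_le_of_norm_le (integrable_dipole_upNormal_liftOne.const_mul S)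
    (f := fun z : F => f (x.snd - x.fst • z) * dipole (upNormal F) (liftOne z)) <|
    .of_forall fun z => by
      rw [norm_mul, norm_of_nonneg (dipole_upNormal_liftOne_pos z).le]
      exact mul_le_mul_of_nonneg_right (hS _) (dipole_upNormal_liftOne_pos z).le
  rw [integral_const_mul, integral_dipole_upNormal_liftOne, norm_eq_abs] at hbound
  rw [poissonIntegral, abs_mul, abs_of_pos (by positivity)]
  calc _ ≤ 2 / sphereArea (finrank ℝ F + 1) * (S * (sphereArea (finrank ℝ F + 1) / 2)) := by
        gcongr
    _ = S := by field_simp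

theorem continuous_poissonIntegral (hf : Continuous f) (hS : ∀ y, |f y| ≤ S) :
    Continuous (poissonIntegral f) := by
  refine continuous_const.mul (continuous_of_dominated
    (bound := fun z => S * dipole (upNormal F) (liftOne z)) (fun x => ?_) (fun x => ?_)
    (integrable_dipole_upNormal_liftOne.const_mul S) ?_)
  · exact Continuous.aestronglyMeasurable (by fun_prop)
  · refine .of_forall fun z => ?_
    rw [norm_mul, norm_of_nonneg (dipole_upNormal_liftOne_pos z).le]
    exact mul_le_mul_of_nonneg_right (hS _) (dipole_upNormal_liftOne_pos z).le
  · exact .of_forall fun z => by fun_prop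

theorem poissonIntegral_eq_potential (f : F → ℝ) {x : WithLp 2 (ℝ × F)} (hx : 0 < x.fst) :
    poissonIntegral f x = 2 / sphereArea (finrank ℝ F + 1) *
      potential volume boundaryPoint (tsupport f) f (dipole (upNormal F)) x := by
  rw [potential_boundaryPoint_eq_integral_liftOne (fun _ => image_eq_zero_of_notMem_tsupport) _ hx]
  simp only [pow_mul_dipole_smul _ _ hx, poissonIntegral]

theorem poissonIntegral_eventuallyEq_potential (f : F → ℝ) {x : WithLp 2 (ℝ × F)}
    (hx : 0 < x.fst) :
    poissonIntegral f =ᶠ[𝓝 x] (2 / sphereArea (finrank ℝ F + 1)) •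
      potential volume boundaryPoint (tsupport f) f (dipole (upNormal F)) := by
  filter_upwards [isOpen_fst_pos.mem_nhds hx] with w hw
  exact poissonIntegral_eq_potential f hw

theorem harmonicAt_poissonIntegral (hf : Continuous f) (hsupp : HasCompactSupport f)
    {x : WithLp 2 (ℝ × F)} (hx : 0 < x.fst) : HarmonicAt (poissonIntegral f) x := by
  rw [harmonicAt_congr_nhds (poissonIntegral_eventuallyEq_potential f hx)]
  refine HarmonicAt.const_smul ?_
  exact harmonicOnNhd_potential continuous_boundaryPoint hsupp isOpen_ne
    (hf.continuousOn.integrableOn_compact hsupp) (fun w hw => harmonicAt_dipole _ hw) x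
    (mem_potentialDomain_boundaryPoint_of_fst_pos _ hx)

theorem fderiv_poissonIntegral_apply (hf : Continuous f) (hsupp : HasCompactSupport f)
    {x : WithLp 2 (ℝ × F)} (hx : 0 < x.fst) (l : WithLp 2 (ℝ × F)) :
    fderiv ℝ (poissonIntegral f) x l = 2 / sphereArea (finrank ℝ F + 1) * ∫ z : F,
      f (x.snd - x.fst • z) * (x.fst⁻¹ *
        (dipoleSlope (upNormal F) l (liftOne z) * dipole (upNormal F) (liftOne z))) := by
  have hdipole : ContDiffOn ℝ 1 (dipole (upNormal F)) {w | w ≠ 0} := fun w hw =>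
    ((harmonicAt_dipole _ hw).1.of_le one_le_two).contDiffWithinAt
  have hint : IntegrableOn f (tsupport f) := hf.continuousOn.integrableOn_compact hsupp
  have hmem := mem_potentialDomain_boundaryPoint_of_fst_pos (tsupport f) hx
  have hdiff := (hasFDerivAt_potential continuous_boundaryPoint hsupp isOpen_ne hint hdipole
    hmem).differentiableAt
  rw [(poissonIntegral_eventuallyEq_potential f hx).fderiv_eq, fderiv_const_smul hdiff,
    smul_apply, fderiv_potential_apply continuous_boundaryPoint hsupp isOpen_ne hint hdipole l hmem,
    potential_boundaryPoint_eq_integral_liftOne (fun _ => image_eq_zero_of_notMem_tsupport) _ hx]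
  simp only [pow_mul_fderiv_dipole_smul_liftOne l hx, smul_eq_mul]

theorem integrable_abs_dipoleSlope_mul_dipole_liftOne (l : WithLp 2 (ℝ × F)) :
    Integrable fun z : F => |dipoleSlope (upNormal F) l (liftOne z)| *
      dipole (upNormal F) (liftOne z) :=
  integrable_dipole_upNormal_liftOne.bdd_mul
    ((measurable_dipoleSlope _ l).comp continuous_liftOne.measurable).abs.aestronglyMeasurable
    (.of_forall fun z => by
      rw [norm_eq_abs, abs_abs]
      exact abs_dipoleSlope_le _ _ _)

theorem abs_fderiv_poissonIntegral_apply_le [Nontrivial F] (hf : Continuous f)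
    (hsupp : HasCompactSupport f) (hS : ∀ y, |f y| ≤ S) {x l : WithLp 2 (ℝ × F)}
    (hx : 0 < x.fst) (hl : ‖l‖ = 1) :
    |fderiv ℝ (poissonIntegral f) x l| ≤ S * Cconst (finrank ℝ F + 1) / x.fst := by
  have hω := sphereArea_succ_pos (finrank ℝ F)
  have hS₀ : 0 ≤ S := (abs_nonneg _).trans (hS 0)
  have hbound := norm_integral_le_of_norm_le
    ((integrable_abs_dipoleSlope_mul_dipole_liftOne l).const_mul (S * x.fst⁻¹))
    (f := fun z : F => f (x.snd - x.fst • z) * (x.fst⁻¹ *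
      (dipoleSlope (upNormal F) l (liftOne z) * dipole (upNormal F) (liftOne z)))) <|
    .of_forall fun z => by
      rw [norm_mul, norm_mul, norm_mul, norm_of_nonneg (dipole_upNormal_liftOne_pos z).le,
        norm_of_nonneg (inv_pos.2 hx).le, norm_eq_abs, norm_eq_abs, mul_assoc S]
      have := dipole_upNormal_liftOne_pos z
      gcongr
      exact hS _
  rw [integral_const_mul, norm_eq_abs] at hbound
  rw [fderiv_poissonIntegral_apply hf hsupp hx, abs_mul, abs_of_pos (by positivity)]
  calc _ ≤ 2 / sphereArea (finrank ℝ F + 1) * (S * x.fst⁻¹ *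
        (Cconst (finrank ℝ F + 1) * (sphereArea (finrank ℝ F + 1) / 2))) := by
        gcongr
        exact hbound.trans (by gcongr; exact integral_abs_dipoleSlope_liftOne_le hl)
    _ = S * Cconst (finrank ℝ F + 1) / x.fst := by field_simp

theorem norm_fderiv_poissonIntegral_le [Nontrivial F] (hf : Continuous f)
    (hsupp : HasCompactSupport f) (hS : ∀ y, |f y| ≤ S) {x : WithLp 2 (ℝ × F)} (hx : 0 < x.fst) :
    ‖fderiv ℝ (poissonIntegral f) x‖ ≤ S * Cconst (finrank ℝ F + 1) / x.fst := by
  have hunit := fun l (hl : ‖l‖ = 1) =>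
    abs_fderiv_poissonIntegral_apply_le hf hsupp hS hx hl
  exact ContinuousLinearMap.opNorm_le_of_unit_norm
    ((abs_nonneg _).trans (hunit _ norm_upNormal)) hunit

end PoissonIntegral

section HalfBallGradient

variable {E : Type*} [NormedAddCommGroup E] [InnerProductSpace ℝ E]

theorem halfBallBarrier_le {e x : E} {M : ℝ} (he : ‖e‖ = 1) (hx : x ∈ closedHalfBall e M) :
    halfBallBarrier e M x ≤ (finrank ℝ E + 1) * M * ‖x‖ := by
  obtain ⟨-, hxM⟩ := hx
  have hM : 0 ≤ M := (norm_nonneg x).trans hxM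
  have hinner : ⟪e, x⟫ ≤ ‖x‖ := by simpa [he] using real_inner_le_norm e x
  calc halfBallBarrier e M x ≤ finrank ℝ E * M * ⟪e, x⟫ + ‖x‖ ^ 2 :=
        sub_le_self _ (by positivity)
    _ ≤ finrank ℝ E * M * ‖x‖ + M * ‖x‖ := by rw [sq]; gcongr
    _ = (finrank ℝ E + 1) * M * ‖x‖ := by ring

variable {e x : E} {M t : ℝ}

theorem inner_and_norm_of_mem_closedBall_smul (he : ‖e‖ = 1) (ht : 0 < t)
    (hx : x ∈ closedBall (t • e) (t / 2)) : t / 2 ≤ ⟪e, x⟫ ∧ ‖x‖ ≤ 3 / 2 * t := by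
  rw [mem_closedBall_iff_norm] at hx
  have hinner := (abs_le.1 (abs_real_inner_le_norm e (x - t • e))).1
  rw [inner_sub_right, real_inner_smul_right, real_inner_self_eq_norm_sq, he] at hinner
  have hnorm := norm_le_norm_add_norm_sub' x (t • e)
  rw [norm_smul, he, norm_of_nonneg ht.le] at hnorm
  constructor <;> linarith

variable [FiniteDimensional ℝ E] {h : E → ℝ} {S : ℝ}

theorem norm_fderiv_le_of_eq_zero_on_flat (he : ‖e‖ = 1) (ht : 0 < t) (htM : 2 * t ≤ M)
    (hcont : ContinuousOn h (closedHalfBall e M))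
    (hharm : ∀ x, 0 < ⟪e, x⟫ → ‖x‖ < M → HarmonicAt h x)
    (hbound : ∀ x ∈ closedHalfBall e M, |h x| ≤ S)
    (hflat : ∀ x ∈ closedHalfBall e M, ⟪e, x⟫ = 0 → h x = 0) :
    ‖fderiv ℝ h (t • e)‖ ≤ 4 * finrank ℝ E * (finrank ℝ E + 1) * S / M := by
  have hM : 0 < M := by linarith
  have hS : 0 ≤ S := (abs_nonneg _).trans (hbound 0 ⟨by simp, by simpa using hM.le⟩)
  have hball : ∀ x ∈ closedBall (t • e) (t / 2), |h x| ≤ 2 * (finrank ℝ E + 1) * S * t / M := by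
    intro x hx
    obtain ⟨hinner, hnorm⟩ := inner_and_norm_of_mem_closedBall_smul he ht hx
    have hxM : x ∈ closedHalfBall e M := ⟨by linarith, by linarith⟩
    calc |h x| ≤ S / M ^ 2 * halfBallBarrier e M x :=
          abs_le_halfBallBarrier_of_eq_zero_on_flat he hM hcont hharm hbound hflat x hxM
      _ ≤ S / M ^ 2 * ((finrank ℝ E + 1) * M * (2 * t)) := by
          gcongr
          exact (halfBallBarrier_le he hxM).trans (by gcongr; linarith)
      _ = 2 * (finrank ℝ E + 1) * S * t / M := by field_simp
  have hharm_ball : HarmonicOnNhd h (closedBall (t • e) (t / 2)) := fun x hx => by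
    obtain ⟨hinner, hnorm⟩ := inner_and_norm_of_mem_closedBall_smul he ht hx
    exact hharm x (by linarith) (by linarith)
  calc _ ≤ finrank ℝ E * (2 * (finrank ℝ E + 1) * S * t / M) / (t / 2) :=
        norm_fderiv_le_of_harmonicOnNhd_closedBall (by positivity) hharm_ball hball
    _ = 4 * finrank ℝ E * (finrank ℝ E + 1) * S / M := by field_simp; ring

end HalfBallGradient

section HalfSpaceComparison

theorem exists_continuous_hasCompactSupport_eqOn {X : Type*} [TopologicalSpace X] [R1Space X]
    [LocallyCompactSpace X] {K U : Set X} {g : X → ℝ} {S : ℝ} (hK : IsCompact K) (hU : IsOpen U)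
    (hKU : K ⊆ U) (hg : ContinuousOn g U) (hS₀ : 0 ≤ S) (hS : ∀ y ∈ U, |g y| ≤ S) :
    ∃ f : X → ℝ, Continuous f ∧ HasCompactSupport f ∧ Set.EqOn f g K ∧ ∀ y, |f y| ≤ S := by
  obtain ⟨χ, hχK, hχcomp, hχU, hχ⟩ :=
    exists_continuousMap_one_of_isCompact_subset_isOpen hK hU hKU
  have hsupp : tsupport (fun y => χ y * g y) ⊆ tsupport χ := tsupport_mul_subset_left
  refine ⟨fun y => χ y * g y, ?_, .of_isClosed_subset hχcomp (isClosed_tsupport _) hsupp,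
    fun y hy => by simp [hχK hy], fun y => ?_⟩
  · exact (χ.continuous.continuousOn.mul hg).continuous_of_tsupport_subset hU (hsupp.trans hχU)
  · by_cases hy : y ∈ U
    · rw [abs_mul, abs_of_nonneg (hχ y).1]
      exact (mul_le_of_le_one_left (abs_nonneg _) (hχ y).2).trans (hS y hy)
    · simpa [image_eq_zero_of_notMem_tsupport fun hmem => hy (hχU hmem)] using hS₀

variable {F : Type*} [NormedAddCommGroup F] [InnerProductSpace ℝ F] {M S t : ℝ}
  {W : Set (WithLp 2 (ℝ × F))} {u : WithLp 2 (ℝ × F) → ℝ}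

theorem boundaryPoint_mem_closedHalfBall {y : F} (hy : ‖y‖ ≤ M) :
    boundaryPoint y ∈ closedHalfBall (upNormal F) M := by
  refine ⟨by rw [inner_upNormal]; rfl, ?_⟩
  simpa [boundaryPoint] using hy

theorem smul_upNormal_mem_closedHalfBall (ht : 0 ≤ t) (htM : t ≤ M) :
    t • upNormal F ∈ closedHalfBall (upNormal F) M := by
  refine ⟨?_, ?_⟩
  · rwa [real_inner_smul_right, real_inner_self_eq_norm_sq, norm_upNormal, one_pow, mul_one]
  · rwa [norm_smul, norm_upNormal, mul_one, norm_of_nonneg ht]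

variable [FiniteDimensional ℝ F]

theorem exists_boundary_extension (hW : IsOpen W) (hMW : closedHalfBall (upNormal F) M ⊆ W)
    (hu : ContinuousOn u W) (hS₀ : 0 ≤ S) (hS : ∀ x ∈ W, |u x| ≤ S) :
    ∃ f : F → ℝ, Continuous f ∧ HasCompactSupport f ∧ (∀ y, |f y| ≤ S) ∧
      ∀ x ∈ closedHalfBall (upNormal F) M, x.fst = 0 → f x.snd = u x := by
  obtain ⟨f, hf, hsupp, hfu, hfS⟩ := exists_continuous_hasCompactSupport_eqOn
    (isCompact_closedBall (0 : F) M) (hW.preimage continuous_boundaryPoint)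
    (fun y hy => hMW (boundaryPoint_mem_closedHalfBall (by simpa using hy)))
    (hu.comp continuous_boundaryPoint.continuousOn fun y hy => hy) hS₀ fun y hy => hS _ hy
  refine ⟨f, hf, hsupp, hfS, fun x hx hx₀ => ?_⟩
  have hxb : boundaryPoint x.snd = x := WithLp.ofLp_injective 2 (Prod.ext hx₀.symm rfl)
  have hnorm : ‖x.snd‖ ≤ M := (WithLp.norm_snd_le _ x).trans hx.2
  rw [hfu (by simpa using hnorm), Function.comp_apply, hxb]

theorem mul_norm_fderiv_smul_upNormal_le [MeasurableSpace F] [BorelSpace F] [Nontrivial F]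
    (hW : IsOpen W) (hMW : closedHalfBall (upNormal F) M ⊆ W) (hu : HarmonicOnNhd u W)
    (hbound : ∀ x ∈ W, |u x| ≤ 1) (ht : 0 < t) (htM : 2 * t ≤ M) :
    t * ‖fderiv ℝ u (t • upNormal F)‖
      ≤ Cconst (finrank ℝ F + 1) + 8 * (finrank ℝ F + 1) * (finrank ℝ F + 2) * (t / M) := by
  have hu_cont : ContinuousOn u W := fun x hx => (hu x hx).1.continuousAt.continuousWithinAt
  obtain ⟨f, hf, hsupp, hf_bound, hfu⟩ :=
    exists_boundary_extension hW hMW hu_cont zero_le_one hbound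
  set v := poissonIntegral f
  have hv (x) (hx : 0 < x.fst) : HarmonicAt v x := harmonicAt_poissonIntegral hf hsupp hx
  have hfst : (t • upNormal F).fst = t := by simp [upNormal]
  have hmem : t • upNormal F ∈ W := hMW (smul_upNormal_mem_closedHalfBall ht.le (by linarith))
  have hv_grad := norm_fderiv_poissonIntegral_le hf hsupp hf_bound (x := t • upNormal F)
    (by rwa [hfst])
  have hdiff_grad := norm_fderiv_le_of_eq_zero_on_flat (h := u - v) (S := 2) norm_upNormal ht htM
    ((hu_cont.mono hMW).sub (continuous_poissonIntegral hf hf_bound).continuousOn)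
    (fun x hx hxM => (hu x (hMW ⟨hx.le, hxM.le⟩)).sub (hv x (by rwa [← inner_upNormal])))
    (fun x hx => (abs_sub _ _).trans (by
      linarith [hbound x (hMW hx), abs_poissonIntegral_le hf_bound x]))
    (fun x hx hx₀ => by
      rw [inner_upNormal] at hx₀
      simp [v, poissonIntegral_of_fst_eq_zero f hx₀, hfu x hx hx₀])
  have hsplit : fderiv ℝ u (t • upNormal F) =
      fderiv ℝ v (t • upNormal F) + fderiv ℝ (u - v) (t • upNormal F) := by
    rw [fderiv_sub ((hu _ hmem).1.differentiableAt two_ne_zero)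
      ((hv _ (by rwa [hfst])).1.differentiableAt two_ne_zero), add_sub_cancel]
  rw [finrank_withLp_real_prod] at hdiff_grad
  rw [hfst] at hv_grad
  calc _ ≤ t * (1 * Cconst (finrank ℝ F + 1) / t + _) := by
        rw [hsplit]
        gcongr
        exact (norm_add_le _ _).trans (add_le_add hv_grad hdiff_grad)
    _ = _ := by push_cast; field_simp; ring

end HalfSpaceComparison

section InteriorBall

theorem norm_fderiv_comp_add_linearIsometryEquiv {V E : Type*} [NormedAddCommGroup V]
    [NormedSpace ℝ V] [NormedAddCommGroup E] [NormedSpace ℝ E] (u : E → ℝ) (p : E)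
    (Φ : V ≃ₗᵢ[ℝ] E) (y : V) :
    ‖fderiv ℝ (fun z => u (p + Φ z)) y‖ = ‖fderiv ℝ u (p + Φ y)‖ := by
  have hcomp := Φ.toContinuousLinearEquiv.comp_right_fderiv (f := fun z => u (p + z)) (x := y)
  rw [fderiv_comp_add_left] at hcomp
  refine (congr_arg norm hcomp).trans ?_
  exact (fderiv ℝ u (p + Φ y)).opNorm_comp_linearIsometryEquiv Φ

variable {E : Type*} [NormedAddCommGroup E] [InnerProductSpace ℝ E]

theorem add_mem_ball_of_mem_closedHalfBall {c y e : E} {R a M : ℝ} (he : ‖e‖ = 1)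
    (ha : a ≤ R) (hM : M ^ 2 + (R - a) ^ 2 < R ^ 2) (hR : 0 < R) (hy : y ∈ closedHalfBall e M) :
    c - (R - a) • e + y ∈ ball c R := by
  obtain ⟨hinner, hnorm⟩ := hy
  rw [mem_ball_iff_norm, show c - (R - a) • e + y - c = y - (R - a) • e by abel]
  refine lt_of_pow_lt_pow_left₀ 2 hR.le (lt_of_le_of_lt ?_ hM)
  rw [norm_sub_sq_real, real_inner_smul_right, real_inner_comm, norm_smul, he, mul_one, norm_eq_abs,
    sq_abs]
  have hcross : 0 ≤ (R - a) * ⟪e, y⟫ := mul_nonneg (sub_nonneg.2 ha) hinner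
  have hsq : ‖y‖ ^ 2 ≤ M ^ 2 := by gcongr
  linarith

variable [FiniteDimensional ℝ E]

theorem exists_linearIsometryEquiv_apply_eq_of_finrank_eq {V : Type*} [NormedAddCommGroup V]
    [InnerProductSpace ℝ V] [FiniteDimensional ℝ V] (hVE : finrank ℝ V = finrank ℝ E) {v : V}
    {e : E} (hv : ‖v‖ = ‖e‖) : ∃ Φ : V ≃ₗᵢ[ℝ] E, Φ v = e := by
  let Ψ : V ≃ₗᵢ[ℝ] E := (stdOrthonormalBasis ℝ V).equiv (stdOrthonormalBasis ℝ E) (finCongr hVE)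
  obtain ⟨Θ, hΘ⟩ := exists_linearIsometryEquiv_apply_eq (v := Ψ v) (w := e) (by simpa using hv)
  exact ⟨Ψ.trans Θ, hΘ⟩

variable {u : E → ℝ}

theorem mul_norm_fderiv_add_smul_le {W : Set E} {p e : E} {M t : ℝ} (hE : 2 ≤ finrank ℝ E)
    (he : ‖e‖ = 1) (hW : IsOpen W) (hMW : ∀ y ∈ closedHalfBall e M, p + y ∈ W)
    (hu : HarmonicOnNhd u W) (hbound : ∀ x ∈ W, |u x| ≤ 1) (ht : 0 < t) (htM : 2 * t ≤ M) :
    t * ‖fderiv ℝ u (p + t • e)‖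
      ≤ Cconst (finrank ℝ E) + 8 * finrank ℝ E * (finrank ℝ E + 1) * (t / M) := by
  obtain ⟨m, hm⟩ : ∃ m, finrank ℝ E = m + 1 + 1 := Nat.exists_eq_add_of_le' hE
  let F := EuclideanSpace ℝ (Fin (m + 1))
  have hF : finrank ℝ F = m + 1 := finrank_euclideanSpace_fin
  obtain ⟨Φ, hΦ⟩ := exists_linearIsometryEquiv_apply_eq_of_finrank_eq (V := WithLp 2 (ℝ × F))
    (by rw [finrank_withLp_real_prod, hF, hm]) (norm_upNormal.trans he.symm)
  have hflat := mul_norm_fderiv_smul_upNormal_le (F := F) (M := M) (t := t)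
    (u := fun y => u (p + Φ y)) (W := (fun y => p + Φ y) ⁻¹' W)
    (hW.preimage (by fun_prop))
    (fun y hy => hMW _ ⟨by rw [← hΦ, Φ.inner_map_map]; exact hy.1, by simpa using hy.2⟩)
    (fun y hy => harmonicAt_comp_add_linearIsometryEquiv (hu _ hy))
    (fun y hy => hbound _ hy) ht htM
  rw [norm_fderiv_comp_add_linearIsometryEquiv, map_smul, hΦ, hF, ← hm] at hflat
  convert hflat using 4 <;> rw [hm] <;> push_cast <;> ring

-- The scales are chosen so that the flat side lies much closer to the sphere than the point does,
-- `σ ^ 6 ≪ σ ^ 4`, while the half-ball is much larger than that distance, `σ ^ 3 ≫ σ ^ 4`.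
theorem mul_norm_fderiv_sub_smul_le_of_ball {c e : E} {R σ : ℝ} (hE : 2 ≤ finrank ℝ E)
    (he : ‖e‖ = 1) (hR : 0 < R) (hu : HarmonicOnNhd u (ball c R))
    (hbound : ∀ x ∈ ball c R, |u x| ≤ 1) (hσ : 0 < σ) (hσ' : σ ≤ 1 / 2) :
    σ ^ 4 * R * ‖fderiv ℝ u (c - ((1 - σ ^ 4) * R) • e)‖
      ≤ (Cconst (finrank ℝ E) + 8 * finrank ℝ E * (finrank ℝ E + 1) * σ) / (1 - σ ^ 2) := by
  have hσ₂ : 0 < 1 - σ ^ 2 := by nlinarith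
  have hσ₆ : σ ^ 6 < 1 := pow_lt_one₀ hσ.le (by linarith) (by norm_num)
  have hradius : (σ ^ 3 * R) ^ 2 + (R - σ ^ 6 * R) ^ 2 < R ^ 2 := by
    nlinarith [mul_pos (mul_pos (pow_pos hσ 6) (pow_pos hR 2)) (sub_pos.2 hσ₆)]
  have hheight : 2 * ((1 - σ ^ 2) * (σ ^ 4 * R)) ≤ σ ^ 3 * R := by
    calc _ = σ ^ 3 * R * (2 * σ * (1 - σ ^ 2)) := by ring
      _ ≤ σ ^ 3 * R := mul_le_of_le_one_right (by positivity) (by nlinarith)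
  have hratio : (1 - σ ^ 2) * (σ ^ 4 * R) / (σ ^ 3 * R) ≤ σ := by
    rw [div_le_iff₀ (by positivity)]
    nlinarith [mul_pos (pow_pos hσ 6) hR]
  have hpoint : c - (R - σ ^ 6 * R) • e + ((1 - σ ^ 2) * (σ ^ 4 * R)) • e
      = c - ((1 - σ ^ 4) * R) • e := by
    module
  have hhalf := mul_norm_fderiv_add_smul_le (p := c - (R - σ ^ 6 * R) • e) hE he isOpen_ball
    (fun y hy => add_mem_ball_of_mem_closedHalfBall he (by nlinarith) hradius hR hy)
    hu hbound (by positivity) hheight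
  rw [hpoint] at hhalf
  rw [le_div_iff₀' hσ₂, ← mul_assoc]
  refine hhalf.trans ?_
  gcongr

theorem exists_pos_forall_div_one_sub_sq_le (C K : ℝ) {ε : ℝ} (hε : 0 < ε) :
    ∃ ρ > 0, ∀ σ, 0 < σ → σ < ρ → σ ≤ 1 / 2 ∧ (C + K * σ) / (1 - σ ^ 2) ≤ C + ε := by
  have hcont : ContinuousAt (fun σ : ℝ => (C + K * σ) / (1 - σ ^ 2)) 0 :=
    ContinuousAt.div (by fun_prop) (by fun_prop) (by simp)
  have hlim := hcont.eventually_le_const (show _ < C + ε by simpa using hε)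
  obtain ⟨ρ, hρ, hle⟩ := Metric.eventually_nhds_iff.1
    (hlim.and (eventually_le_nhds (show (0 : ℝ) < 1 / 2 by norm_num)))
  refine ⟨ρ, hρ, fun σ hσ hσρ => (hle ?_).symm⟩
  rwa [dist_zero_right, norm_of_nonneg hσ.le]

theorem limsup_gradient_interior_ball_general (hE : 2 ≤ finrank ℝ E) {ε : ℝ} (hε : 0 < ε) :
    ∃ δ > 0, ∀ (c ξ : E) (R : ℝ), 0 < R → ξ ∈ sphere c R → ∀ t : ℝ, 1 - δ < t → t < 1 →
      ∀ u : E → ℝ, HarmonicOnNhd u (ball c R) → (∀ y ∈ ball c R, |u y| ≤ 1) →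
        dist (c + t • (ξ - c)) ξ * ‖fderiv ℝ u (c + t • (ξ - c))‖
          ≤ Cconst (finrank ℝ E) + ε := by
  obtain ⟨ρ, hρ, hsmall⟩ := exists_pos_forall_div_one_sub_sq_le (Cconst (finrank ℝ E))
    (8 * finrank ℝ E * (finrank ℝ E + 1)) hε
  refine ⟨ρ ^ 4, by positivity, fun c ξ R hR hξ t ht₀ ht₁ u hu hbound => ?_⟩
  set σ : ℝ := (1 - t) ^ (1 / 4 : ℝ)
  have hσ₄ : σ ^ 4 = 1 - t := by
    rw [← rpow_natCast, ← rpow_mul (by linarith)]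
    norm_num
  have hσ : 0 < σ := rpow_pos_of_pos (by linarith) _
  obtain ⟨hσ_half, hσ_bound⟩ :=
    hsmall σ hσ (lt_of_pow_lt_pow_left₀ 4 hρ.le (by linarith))
  have hnorm : ‖c - ξ‖ = R := by rw [← dist_eq_norm, dist_comm, mem_sphere.1 hξ]
  have hball := mul_norm_fderiv_sub_smul_le_of_ball (e := R⁻¹ • (c - ξ)) hE
    (by rw [norm_smul, hnorm, norm_inv, norm_of_nonneg hR.le, inv_mul_cancel₀ hR.ne']) hR hu
    hbound hσ hσ_half
  have hpoint : c - ((1 - σ ^ 4) * R) • R⁻¹ • (c - ξ) = c + t • (ξ - c) := by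
    rw [hσ₄, smul_smul, mul_inv_cancel_right₀ hR.ne']
    module
  have hdist : dist (c + t • (ξ - c)) ξ = σ ^ 4 * R := by
    rw [dist_eq_norm, show c + t • (ξ - c) - ξ = (1 - t) • (c - ξ) by module, norm_smul, hnorm,
      norm_of_nonneg (by linarith), hσ₄]
  rw [hpoint] at hball
  rw [hdist]
  exact hball.trans hσ_bound

end InteriorBall

/-- Let `Ω ⊂ ℝⁿ` (`n ≥ 2`) be a domain and suppose `ξ ∈ ∂Ω` is touched
by an interior ball `B = ball c R ⊆ Ω`. Then, along the radius `x_t = c + t(ξ - c)`,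
`limsup_{x→ξ} sup_{u ∈ 𝔘(Ω)} |x-ξ| |∇u(x)| ≤ C_n`, where `𝔘(Ω)` is the set of
harmonic functions on `Ω` with `sup_Ω |u| ≤ 1`; i.e. for every `ε > 0` there is
`δ > 0` such that for all `t ∈ (1-δ, 1)` and all `u ∈ 𝔘(Ω)`,
`|x_t - ξ| |∇u(x_t)| ≤ C_n + ε`. -/
theorem limsup_gradient_interior_ball
    (n : ℕ) (hn : 2 ≤ n) (Ω : Set (Eu n)) (hΩo : IsOpen Ω) (hΩc : IsConnected Ω)
    (c ξ : Eu n) (R : ℝ) (hR : 0 < R)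
    (hball : Metric.ball c R ⊆ Ω) (hξs : ξ ∈ Metric.sphere c R) (hξ : ξ ∈ frontier Ω)
    (ε : ℝ) (hε : 0 < ε) :
    ∃ δ > 0, ∀ t : ℝ, 1 - δ < t → t < 1 →
      ∀ u : Eu n → ℝ, IsHarmonicOn u Ω → (∀ y ∈ Ω, |u y| ≤ 1) →
        dist (c + t • (ξ - c)) ξ * ‖gradient u (c + t • (ξ - c))‖ ≤ Cconst n + ε := by
  obtain ⟨δ, hδ, hbound⟩ := limsup_gradient_interior_ball_general (E := Eu n)
    (by rwa [finrank_euclideanSpace_fin]) hε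
  rw [finrank_euclideanSpace_fin] at hbound
  refine ⟨δ, hδ, fun t ht₀ ht₁ u hu hu₁ => ?_⟩
  rw [gradient, LinearIsometryEquiv.norm_map]
  exact hbound c ξ R hR hξs t ht₀ ht₁ u (fun x hx => hu.harmonicOnNhd hΩo x (hball hx))
    fun y hy => hu₁ y (hball hy)
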